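/- arXiv:2206.02863 — 5 statements merged into one kernel-verified Lean document; each statement's English description precedes it below -/
import Mathlib

section
/- Let n be a positive integer and let M be an n×n real matrix. Then there exists a real orthogonal n×n matrix B (i.e., BᵀB = I) such that ‖M ∘ B‖ = ‖M‖_S. -/
open scoped ComplexOrder

/-- The operator norm (induced by Euclidean norms) of a complex matrix. -/
noncomputable def Matrix.copNorm {m n : Type*} [Fintype m] [Fintype n] [DecidableEq n]
    (M : Matrix m n ℂ) : ℝ :=
  ‖LinearMap.toContinuousLinearMap (Matrix.toEuclideanLin M)‖

/-- The operator norm (induced by Euclidean norms) of a real matrix. -/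
noncomputable def Matrix.ropNorm {m n : Type*} [Fintype m] [Fintype n] [DecidableEq n]
    (M : Matrix m n ℝ) : ℝ :=
  ‖LinearMap.toContinuousLinearMap (Matrix.toEuclideanLin M)‖

/-- The Schur norm of a complex square matrix: the supremum of `‖M ∘ C‖` over all
complex contractions `C`, where `∘` is the entrywise (Schur/Hadamard) product. -/
noncomputable def Matrix.schurNorm {n : Type*} [Fintype n] [DecidableEq n]
    (M : Matrix n n ℂ) : ℝ :=
  sSup {x | ∃ C : Matrix n n ℂ, Matrix.copNorm C ≤ 1 ∧ x = Matrix.copNorm (Matrix.hadamard M C)}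

/-- `rSchur n`: the supremum of Schur norms of `n × n` real matrices whose entries all have
absolute value at most `1`. -/
noncomputable def rSchur (n : ℕ) : ℝ :=
  sSup {x | ∃ M : Matrix (Fin n) (Fin n) ℝ, (∀ i j, |M i j| ≤ 1) ∧
    x = Matrix.schurNorm (M.map Complex.ofReal)}

open scoped InnerProductSpace

namespace SchurAux

lemma bil {n : ℕ} (A : Matrix (Fin n) (Fin n) ℝ) (a b : EuclideanSpace ℝ (Fin n)) :
    ⟪b, Matrix.toEuclideanLin A a⟫_ℝ = ∑ i, ∑ j, b i * A i j * a j := by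
  simp only [PiLp.inner_apply, Matrix.ofLp_toLpLin, Matrix.toLin'_apply, Matrix.mulVec, dotProduct]
  refine Finset.sum_congr rfl fun i _ => ?_
  simp only [RCLike.inner_apply, conj_trivial, Finset.sum_mul]
  refine Finset.sum_congr rfl fun j _ => by ring

lemma bilC {n : ℕ} (A : Matrix (Fin n) (Fin n) ℂ) (a b : EuclideanSpace ℂ (Fin n)) :
    ⟪b, Matrix.toEuclideanLin A a⟫_ℂ = ∑ i, ∑ j, star (b i) * A i j * a j := by
  simp only [PiLp.inner_apply, Matrix.ofLp_toLpLin, Matrix.toLin'_apply, Matrix.mulVec, dotProduct]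
  refine Finset.sum_congr rfl fun i _ => ?_
  simp only [RCLike.inner_apply, Finset.sum_mul]
  refine Finset.sum_congr rfl fun j _ => ?_
  simp only [starRingEnd_apply]
  ring

lemma svd {n : ℕ} (f : EuclideanSpace ℝ (Fin n) →ₗ[ℝ] EuclideanSpace ℝ (Fin n)) :
    ∃ (v u : OrthonormalBasis (Fin n) ℝ (EuclideanSpace ℝ (Fin n))) (σ : Fin n → ℝ),
      (∀ i, 0 ≤ σ i) ∧ ∀ i, f (v i) = σ i • u i := by
  have hs := f.isSymmetric_adjoint_comp_self
  have hfr : Module.finrank ℝ (EuclideanSpace ℝ (Fin n)) = n := by simp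
  let v := hs.eigenvectorBasis hfr
  have hin : ∀ i j, i ≠ j → ⟪f (v i), f (v j)⟫_ℝ = 0 := by
    intro i j hij
    have h1 := hs.apply_eigenvectorBasis hfr j
    rw [← LinearMap.adjoint_inner_right]
    change ⟪v i, (LinearMap.adjoint f ∘ₗ f) (v j)⟫_ℝ = 0
    rw [h1, inner_smul_right]
    change _ * ⟪v i, v j⟫_ℝ = 0
    rw [v.inner_eq_zero hij, mul_zero]
  let s : Set (Fin n) := {i | f (v i) ≠ 0}
  let w : Fin n → EuclideanSpace ℝ (Fin n) := fun i => ‖f (v i)‖⁻¹ • f (v i)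
  have hw : Orthonormal ℝ (s.domRestrict w) := by
    constructor
    · rintro ⟨i, hi⟩
      have : ‖f (v i)‖ ≠ 0 := norm_ne_zero_iff.mpr hi
      change ‖‖f (v i)‖⁻¹ • f (v i)‖ = 1
      rw [norm_smul, norm_inv, norm_norm, inv_mul_cancel₀ this]
    · rintro ⟨i, hi⟩ ⟨j, hj⟩ hij
      have hij' : i ≠ j := fun h => hij (Subtype.ext h)
      change ⟪‖f (v i)‖⁻¹ • f (v i), ‖f (v j)‖⁻¹ • f (v j)⟫_ℝ = 0
      rw [inner_smul_left, inner_smul_right, hin i j hij']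
      simp
  obtain ⟨u, hu⟩ := hw.exists_orthonormalBasis_extension_of_card_eq (by simp)
  refine ⟨v, u, fun i => ‖f (v i)‖, fun i => norm_nonneg _, fun i => ?_⟩
  by_cases hi : f (v i) = 0
  · simp [hi]
  · rw [hu i hi]
    have : ‖f (v i)‖ ≠ 0 := norm_ne_zero_iff.mpr hi
    simp only [w]
    rw [smul_smul, mul_inv_cancel₀ this, one_smul]

lemma trace_form {n : ℕ} (A R : Matrix (Fin n) (Fin n) ℝ)
    (v : OrthonormalBasis (Fin n) ℝ (EuclideanSpace ℝ (Fin n))) :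
    ∑ i, ∑ j, A i j * R i j =
      ∑ i, ⟪Matrix.toEuclideanLin A (v i), Matrix.toEuclideanLin R (v i)⟫_ℝ := by
  have key : ∀ b : OrthonormalBasis (Fin n) ℝ (EuclideanSpace ℝ (Fin n)),
      ∑ i, ⟪Matrix.toEuclideanLin A (b i), Matrix.toEuclideanLin R (b i)⟫_ℝ =
      LinearMap.trace ℝ _ (LinearMap.adjoint (Matrix.toEuclideanLin A) ∘ₗ
        Matrix.toEuclideanLin R) := by
    intro b
    rw [LinearMap.trace_eq_sum_inner _ b]
    refine Finset.sum_congr rfl fun i _ => ?_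
    rw [LinearMap.comp_apply, LinearMap.adjoint_inner_right]
  rw [key v, ← key (EuclideanSpace.basisFun (Fin n) ℝ), Finset.sum_comm]
  refine Finset.sum_congr rfl fun i _ => ?_
  simp [PiLp.inner_apply, Matrix.mulVec_single, mul_comm]

lemma exists_orth {n : ℕ} (A R : Matrix (Fin n) (Fin n) ℝ)
    (hR : ∀ a b : EuclideanSpace ℝ (Fin n), ⟪b, Matrix.toEuclideanLin R a⟫_ℝ ≤ ‖b‖ * ‖a‖) :
    ∃ B : Matrix (Fin n) (Fin n) ℝ, B.transpose * B = 1 ∧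
      ∑ i, ∑ j, A i j * R i j ≤ ∑ i, ∑ j, A i j * B i j := by
  obtain ⟨v, u, σ, hσ, h⟩ := svd (Matrix.toEuclideanLin A)
  let U := v.equiv u (Equiv.refl _)
  let B : Matrix (Fin n) (Fin n) ℝ := Matrix.toEuclideanLin.symm U.toLinearEquiv.toLinearMap
  have hB : ∀ x, Matrix.toEuclideanLin B x = U x := by
    intro x
    simp only [B, LinearEquiv.apply_symm_apply]
    rfl
  refine ⟨B, ?_, ?_⟩
  · ext i j
    have h1 : ⟪U (EuclideanSpace.single i 1), U (EuclideanSpace.single j 1)⟫_ℝ =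
        ⟪EuclideanSpace.single i (1:ℝ), EuclideanSpace.single j (1:ℝ)⟫_ℝ := U.inner_map_map _ _
    rw [← hB, ← hB] at h1
    simp [PiLp.inner_apply, Matrix.mulVec_single] at h1
    simp only [Matrix.mul_apply, Matrix.transpose_apply, Matrix.one_apply]
    rw [← Finset.sum_congr rfl fun k _ => mul_comm (B k j) (B k i), h1]
  · rw [trace_form A R v, trace_form A B v]
    refine Finset.sum_le_sum fun i _ => ?_
    have hU : U (v i) = u i := by simp [U]
    rw [h, hB, hU, inner_smul_left, inner_smul_left]
    refine mul_le_mul_of_nonneg_left ?_ (by simpa using hσ i)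
    have := hR (v i) (u i)
    simpa using this

lemma phase (z : ℂ) : ∃ p : ℂ, ‖p‖ = 1 ∧ z = ‖z‖ * p :=
  ⟨Complex.exp (z.arg * Complex.I), Complex.norm_exp_ofReal_mul_I _,
    (Complex.norm_mul_exp_arg_mul_I z).symm⟩

lemma real_le {n : ℕ} (N : Matrix (Fin n) (Fin n) ℝ) :
    Matrix.ropNorm N ≤ Matrix.copNorm (N.map Complex.ofReal) := by
  unfold Matrix.ropNorm
  refine ContinuousLinearMap.opNorm_le_bound _ (norm_nonneg _) fun x => ?_
  have h := (LinearMap.toContinuousLinearMap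
    (Matrix.toEuclideanLin (N.map Complex.ofReal))).le_opNorm
      (WithLp.toLp 2 (fun i => (x i : ℂ)))
  have e1 : ‖(WithLp.toLp 2 (fun i => (x i : ℂ)) : EuclideanSpace ℂ (Fin n))‖ = ‖x‖ := by
    simp [EuclideanSpace.norm_eq]
  have e2 : ‖(LinearMap.toContinuousLinearMap
    (Matrix.toEuclideanLin (N.map Complex.ofReal)))
      (WithLp.toLp 2 (fun i => (x i : ℂ)))‖ = ‖Matrix.toEuclideanLin N x‖ := by
    simp only [EuclideanSpace.norm_eq, LinearMap.coe_toContinuousLinearMap', Matrix.ofLp_toLpLin,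
      Matrix.toLin'_apply, Matrix.mulVec, dotProduct, Matrix.map_apply]
    congr 1
    refine Finset.sum_congr rfl fun i _ => ?_
    rw [← Complex.norm_real]
    push_cast
    rfl
  rw [e1, e2] at h
  exact h

lemma cop_unitary {n : ℕ} (B : Matrix (Fin n) (Fin n) ℝ) (hB : B.transpose * B = 1) :
    Matrix.copNorm (B.map Complex.ofReal) ≤ 1 := by
  refine ContinuousLinearMap.opNorm_le_bound _ zero_le_one fun x => ?_
  have h1 : (B.map Complex.ofReal).conjTranspose * B.map Complex.ofReal = 1 := by
    have : (B.map Complex.ofReal).conjTranspose = B.transpose.map Complex.ofReal := by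
      ext i j; simp
    rw [this]
    have := congrArg (fun X : Matrix (Fin n) (Fin n) ℝ => X.map Complex.ofRealHom) hB
    simp only [Matrix.map_mul] at this
    rw [Matrix.map_one _ (map_zero _) (map_one _)] at this
    exact this
  have h2 : ‖Matrix.toEuclideanLin (B.map Complex.ofReal) x‖ ^ 2 = ‖x‖ ^ 2 := by
    rw [← inner_self_eq_norm_sq (𝕜 := ℂ), ← inner_self_eq_norm_sq (𝕜 := ℂ),
      ← LinearMap.adjoint_inner_right, ← Matrix.toEuclideanLin_conjTranspose_eq_adjoint,
      Matrix.toLpLin_apply, Matrix.toLpLin_apply]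
    simp [h1]
  rw [one_mul]
  exact le_of_eq ((sq_eq_sq₀ (norm_nonneg _) (norm_nonneg _)).mp h2)

lemma main_bound {n : ℕ} (M : Matrix (Fin n) (Fin n) ℝ) (K : ℝ) 
    (hK : ∀ B : Matrix (Fin n) (Fin n) ℝ, B.transpose * B = 1 →
      Matrix.ropNorm (Matrix.hadamard M B) ≤ K)
    (C : Matrix (Fin n) (Fin n) ℂ) (hC : Matrix.copNorm C ≤ 1)
    (x y : EuclideanSpace ℂ (Fin n)) :
    (⟪y, Matrix.toEuclideanLin (Matrix.hadamard (M.map Complex.ofReal) C) x⟫_ℂ).re ≤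
      K * ‖x‖ * ‖y‖ := by
  choose p hp hxp using fun j => phase (x j)
  choose q hq hyq using fun i => phase (y i)
  let R : Matrix (Fin n) (Fin n) ℝ := fun i j => (star (q i) * C i j * p j).re
  let X : EuclideanSpace ℝ (Fin n) := WithLp.toLp 2 fun j => ‖x j‖
  let Y : EuclideanSpace ℝ (Fin n) := WithLp.toLp 2 fun j => ‖y j‖
  have hX : ‖X‖ = ‖x‖ := by simp [X, EuclideanSpace.norm_eq]
  have hY : ‖Y‖ = ‖y‖ := by simp [Y, EuclideanSpace.norm_eq]
  have hR : ∀ a b : EuclideanSpace ℝ (Fin n),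
      ⟪b, Matrix.toEuclideanLin R a⟫_ℝ ≤ ‖b‖ * ‖a‖ := by
    intro a b
    let a' : EuclideanSpace ℂ (Fin n) := WithLp.toLp 2 fun j => a j * p j
    let b' : EuclideanSpace ℂ (Fin n) := WithLp.toLp 2 fun j => b j * q j
    have ha : ‖a'‖ = ‖a‖ := by simp [a', EuclideanSpace.norm_eq, hp]
    have hb : ‖b'‖ = ‖b‖ := by simp [b', EuclideanSpace.norm_eq, hq]
    have h1 : ⟪b, Matrix.toEuclideanLin R a⟫_ℝ = (⟪b', Matrix.toEuclideanLin C a'⟫_ℂ).re := by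
      rw [bil, bilC, Complex.re_sum]
      refine Finset.sum_congr rfl fun i _ => ?_
      rw [Complex.re_sum]
      refine Finset.sum_congr rfl fun j _ => ?_
      have : star (b' i) * C i j * a' j = ((b i * a j : ℝ) : ℂ) * (star (q i) * C i j * p j) := by
        simp only [a', b', star_mul', RCLike.star_def, Complex.conj_ofReal]
        push_cast
        ring
      rw [this, Complex.re_ofReal_mul]
      simp only [R]
      ring
    rw [h1, ← ha, ← hb]
    refine (Complex.re_le_norm _).trans ((norm_inner_le_norm _ _).trans ?_)
    refine mul_le_mul_of_nonneg_left ?_ (norm_nonneg _)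
    have := (LinearMap.toContinuousLinearMap (Matrix.toEuclideanLin C)).le_of_opNorm_le hC a'
    simpa using this
  let A : Matrix (Fin n) (Fin n) ℝ := fun i j => ‖y i‖ * M i j * ‖x j‖
  obtain ⟨B, hB, hAB⟩ := exists_orth A R hR
  have e1 : (⟪y, Matrix.toEuclideanLin (Matrix.hadamard (M.map Complex.ofReal) C) x⟫_ℂ).re =
      ∑ i, ∑ j, A i j * R i j := by
    rw [bilC, Complex.re_sum]
    refine Finset.sum_congr rfl fun i _ => ?_
    rw [Complex.re_sum]
    refine Finset.sum_congr rfl fun j _ => ?_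
    have : star (y i) * (Matrix.hadamard (M.map Complex.ofReal) C) i j * x j =
        ((A i j : ℝ) : ℂ) * (star (q i) * C i j * p j) := by
      conv_lhs => rw [hyq i, hxp j]
      simp only [A, Matrix.hadamard_apply, Matrix.map_apply, star_mul', RCLike.star_def,
        Complex.conj_ofReal]
      push_cast
      ring
    rw [this, Complex.re_ofReal_mul]
  have e2 : ∑ i, ∑ j, A i j * B i j =
      ⟪Y, Matrix.toEuclideanLin (Matrix.hadamard M B) X⟫_ℝ := by
    rw [bil]
    refine Finset.sum_congr rfl fun i _ => Finset.sum_congr rfl fun j _ => ?_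
    simp only [A, X, Y, Matrix.hadamard_apply]
    ring
  rw [e1]
  refine hAB.trans ?_
  rw [e2, ← hX, ← hY]
  refine (real_inner_le_norm _ _).trans ?_
  rw [mul_comm]
  refine mul_le_mul_of_nonneg_right ?_ (norm_nonneg _)
  exact (LinearMap.toContinuousLinearMap
    (Matrix.toEuclideanLin (Matrix.hadamard M B))).le_of_opNorm_le (hK B hB) X

lemma exists_max {n : ℕ} (M : Matrix (Fin n) (Fin n) ℝ) :
    ∃ B : Matrix (Fin n) (Fin n) ℝ, B.transpose * B = 1 ∧
      ∀ B' : Matrix (Fin n) (Fin n) ℝ, B'.transpose * B' = 1 →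
        Matrix.ropNorm (Matrix.hadamard M B') ≤ Matrix.ropNorm (Matrix.hadamard M B) := by
  let S : Set (Matrix (Fin n) (Fin n) ℝ) := {B | B.transpose * B = 1}
  have hcl : IsClosed S := isClosed_eq (by fun_prop) continuous_const
  have hsub : S ⊆ Set.univ.pi fun _ => Set.univ.pi fun _ => Set.Icc (-1 : ℝ) 1 := by
    intro B hB i _ j _
    have h : B ∈ Matrix.unitaryGroup (Fin n) ℝ := by
      rw [Matrix.mem_unitaryGroup_iff']
      exact hB
    have := entry_norm_bound_of_unitary h i j
    rw [Real.norm_eq_abs] at this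
    exact abs_le.mp this
  have hcomp : IsCompact S :=
    (isCompact_univ_pi fun _ => isCompact_univ_pi fun _ => isCompact_Icc).of_isClosed_subset hcl hsub
  have hcont : Continuous fun B : Matrix (Fin n) (Fin n) ℝ =>
      Matrix.ropNorm (Matrix.hadamard M B) := by
    let L : Matrix (Fin n) (Fin n) ℝ →ₗ[ℝ]
        (EuclideanSpace ℝ (Fin n) →L[ℝ] EuclideanSpace ℝ (Fin n)) :=
      LinearMap.toContinuousLinearMap.toLinearMap ∘ₗ Matrix.toEuclideanLin.toLinearMap
    have hL : Continuous L := LinearMap.continuous_of_finiteDimensional L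
    have hh : Continuous fun B : Matrix (Fin n) (Fin n) ℝ => Matrix.hadamard M B :=
      continuous_matrix fun i j => by
        simp only [Matrix.hadamard_apply]
        exact continuous_const.mul (continuous_id.matrix_elem i j)
    exact (hL.comp hh).norm
  obtain ⟨B, hB, hmax⟩ := hcomp.exists_isMaxOn ⟨1, by simp [S]⟩ hcont.continuousOn
  exact ⟨B, hB, fun B' hB' => hmax hB'⟩

end SchurAux

/-- For any real square matrix `M`, the Schur norm is attained at a real orthogonal matrix. -/
theorem orthogonal_witness_for_schur_norm (n : ℕ) (hn : 0 < n)
    (M : Matrix (Fin n) (Fin n) ℝ) :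
    ∃ B : Matrix (Fin n) (Fin n) ℝ, B.transpose * B = 1 ∧
      Matrix.ropNorm (Matrix.hadamard M B) = Matrix.schurNorm (M.map Complex.ofReal) := by
  obtain ⟨B, hB, hmax⟩ := SchurAux.exists_max M
  refine ⟨B, hB, ?_⟩
  have hub : ∀ C : Matrix (Fin n) (Fin n) ℂ, Matrix.copNorm C ≤ 1 →
      Matrix.copNorm (Matrix.hadamard (M.map Complex.ofReal) C) ≤
        Matrix.ropNorm (Matrix.hadamard M B) := by
    intro C hC
    refine ContinuousLinearMap.opNorm_le_bound _ (norm_nonneg _) fun x => ?_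
    set y := Matrix.toEuclideanLin (Matrix.hadamard (M.map Complex.ofReal) C) x with hy
    have h := SchurAux.main_bound M _ hmax C hC x y
    rw [← hy] at h
    have h2 : (⟪y, y⟫_ℂ).re = ‖y‖ ^ 2 := inner_self_eq_norm_sq (𝕜 := ℂ) y
    rw [h2, sq] at h
    change ‖y‖ ≤ _
    by_cases h0 : ‖y‖ = 0
    · rw [h0]
      exact mul_nonneg (norm_nonneg _) (norm_nonneg _)
    · exact le_of_mul_le_mul_right h (lt_of_le_of_ne (norm_nonneg _) (Ne.symm h0))
  have heq : (Matrix.hadamard M B).map Complex.ofReal =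
      Matrix.hadamard (M.map Complex.ofReal) (B.map Complex.ofReal) := by
    ext i j
    simp
  have hB1 := SchurAux.cop_unitary B hB
  have hg : IsGreatest {x | ∃ C : Matrix (Fin n) (Fin n) ℂ, Matrix.copNorm C ≤ 1 ∧
      x = Matrix.copNorm (Matrix.hadamard (M.map Complex.ofReal) C)}
      (Matrix.ropNorm (Matrix.hadamard M B)) := by
    constructor
    · refine ⟨B.map Complex.ofReal, hB1, le_antisymm ?_ (hub _ hB1)⟩
      rw [← heq]
      exact SchurAux.real_le _
    · rintro z ⟨C, hC, rfl⟩
      exact hub C hC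
  exact hg.csSup_eq.symm
end

section
/- Let n be a positive integer. There exists an n×n real matrix M, all of whose entries have absolute value at most 1, with ‖M‖_S = √n, if and only if there exists an n×n Hadamard matrix. In other words, r_n = √n if and only if an n×n Hadamard matrix exists. -/
open scoped ComplexOrder

open scoped Matrix.Norms.L2Operator in
theorem copNorm_eq_l2 {n : ℕ} (C : Matrix (Fin n) (Fin n) ℂ) : Matrix.copNorm C = ‖C‖ := by
  rw [Matrix.l2_opNorm_def]; rfl

theorem variance_id {n : ℕ} (hn : 0 < n) (a : Fin n → ℂ) :
    ‖∑ j, a j‖ ^ 2 + (n : ℝ) * ∑ j, ‖a j - (∑ k, a k) / n‖ ^ 2 = n * ∑ j, ‖a j‖ ^ 2 := by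
  have hn' : (n : ℂ) ≠ 0 := by exact_mod_cast hn.ne'
  set S := ∑ k, a k with hS
  have h : ∀ z : ℂ, ((‖z‖ ^ 2 : ℝ) : ℂ) = z * (starRingEnd ℂ) z := by
    intro z; rw [Complex.mul_conj, Complex.normSq_eq_norm_sq]
  have e : (∑ j, (a j - S / n) * (starRingEnd ℂ) (a j - S / n)) =
      ∑ j, a j * (starRingEnd ℂ) (a j) - S * (starRingEnd ℂ) S / n := by
    have : ∀ j, (a j - S / n) * (starRingEnd ℂ) (a j - S / n) =
        a j * (starRingEnd ℂ) (a j) - a j * ((starRingEnd ℂ) S / n)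
          - (S / n) * (starRingEnd ℂ) (a j) + S * (starRingEnd ℂ) S / n / n := by
      intro j; simp only [map_sub, map_div₀, map_natCast]; ring
    simp only [this, Finset.sum_add_distrib, Finset.sum_sub_distrib, ← Finset.sum_mul,
      ← Finset.mul_sum, ← map_sum, ← hS]
    simp
    field_simp
    ring
  have : ((‖S‖ ^ 2 + (n : ℝ) * ∑ j, ‖a j - S / n‖ ^ 2 : ℝ) : ℂ)
      = ((n * ∑ j, ‖a j‖ ^ 2 : ℝ) : ℂ) := by
    rw [Complex.ofReal_add, Complex.ofReal_mul, Complex.ofReal_mul, Complex.ofReal_sum,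
      Complex.ofReal_sum]
    simp only [h]
    rw [e]
    simp only [Complex.ofReal_natCast]
    field_simp
    ring
  exact_mod_cast this

open scoped Matrix.Norms.L2Operator in
theorem mulVec_sq_le {n : ℕ} (C : Matrix (Fin n) (Fin n) ℂ) (x : Fin n → ℂ) :
    ∑ i, ‖C.mulVec x i‖ ^ 2 ≤ ‖C‖ ^ 2 * ∑ j, ‖x j‖ ^ 2 := by
  have h := Matrix.l2_opNorm_mulVec C (WithLp.toLp 2 x)
  have h2 := pow_le_pow_left₀ (norm_nonneg _) h 2
  rw [mul_pow, EuclideanSpace.norm_sq_eq, EuclideanSpace.norm_sq_eq] at h2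
  simpa using h2

open scoped Matrix.Norms.L2Operator in
theorem col_le {n : ℕ} (C : Matrix (Fin n) (Fin n) ℂ) (hC : ‖C‖ ≤ 1) (j : Fin n) :
    ∑ i, ‖C i j‖ ^ 2 ≤ 1 := by
  have h := mulVec_sq_le C (Pi.single j 1)
  have e : ∑ k, ‖(Pi.single j (1 : ℂ) : Fin n → ℂ) k‖ ^ 2 = 1 := by
    rw [Finset.sum_eq_single j] <;> simp +contextual
  rw [e] at h
  simp only [Matrix.mulVec_single_one, Matrix.col_apply] at h
  nlinarith [norm_nonneg C]

open scoped Matrix.Norms.L2Operator in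
theorem isometry_of_cols {n : ℕ} (C : Matrix (Fin n) (Fin n) ℂ) (hC : ‖C‖ ≤ 1)
    (h : ∀ j, ∑ i, ‖C i j‖ ^ 2 = 1) : C.conjTranspose * C = 1 := by
  have hd : ∀ j, (C.conjTranspose * C) j j = 1 := by
    intro j
    rw [Matrix.mul_apply]
    have := h j
    have h2 : ((∑ i, ‖C i j‖ ^ 2 : ℝ) : ℂ) = 1 := by rw [this]; simp
    rw [← h2, Complex.ofReal_sum]
    refine Finset.sum_congr rfl fun i _ => ?_
    rw [Matrix.conjTranspose_apply, mul_comm, ← Complex.normSq_eq_norm_sq, ← Complex.mul_conj]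
    rfl
  have hn : ‖C.conjTranspose * C‖ ≤ 1 := by
    rw [Matrix.l2_opNorm_conjTranspose_mul_self]
    nlinarith [norm_nonneg C]
  ext i j
  by_cases hij : i = j
  · subst hij; rw [hd]; simp
  · rw [Matrix.one_apply_ne hij]
    have h1 := col_le _ hn j
    have h2 : ∑ k ∈ {i, j}, ‖(C.conjTranspose * C) k j‖ ^ 2 ≤
        ∑ k, ‖(C.conjTranspose * C) k j‖ ^ 2 :=
      Finset.sum_le_sum_of_subset_of_nonneg (Finset.subset_univ _) (fun _ _ _ => by positivity)
    rw [Finset.sum_pair hij, hd] at h2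
    simp only [norm_one] at h2
    have h3 : ‖(C.conjTranspose * C) i j‖ ^ 2 ≤ 0 := by linarith
    have h4 : ‖(C.conjTranspose * C) i j‖ = 0 := by
      nlinarith [norm_nonneg ((C.conjTranspose * C) i j)]
    exact norm_eq_zero.mp h4

open scoped Matrix.Norms.L2Operator in
/-- exact slack identity -/
theorem slack_id {n : ℕ} (hn : 0 < n) (M : Matrix (Fin n) (Fin n) ℝ)
    (C : Matrix (Fin n) (Fin n) ℂ) (x : Fin n → ℂ) :
    ∑ i, ‖((M.map Complex.ofReal).hadamard C).mulVec x i‖ ^ 2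
      + n * ∑ i, ∑ j, ‖(M i j : ℂ) * C i j * x j
          - (((M.map Complex.ofReal).hadamard C).mulVec x i) / n‖ ^ 2
      + n * ∑ i, ∑ j, (1 - (M i j) ^ 2) * ‖C i j‖ ^ 2 * ‖x j‖ ^ 2
      + n * ∑ j, (1 - ∑ i, ‖C i j‖ ^ 2) * ‖x j‖ ^ 2 = n * ∑ j, ‖x j‖ ^ 2 := by
  have h1 : ∀ i, ((M.map Complex.ofReal).hadamard C).mulVec x i
      = ∑ j, (M i j : ℂ) * C i j * x j := by
    intro i; simp [Matrix.mulVec, dotProduct]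
  simp only [h1]
  have h2 : ∀ i, ‖∑ j, (M i j : ℂ) * C i j * x j‖ ^ 2 = n * ∑ j, ‖(M i j : ℂ) * C i j * x j‖ ^ 2
      - (n : ℝ) * ∑ j, ‖(M i j : ℂ) * C i j * x j - (∑ j, (M i j : ℂ) * C i j * x j) / n‖ ^ 2 := by
    intro i
    have := variance_id hn (fun j => (M i j : ℂ) * C i j * x j)
    linarith
  have h3 : ∑ i, ‖∑ j, (M i j : ℂ) * C i j * x j‖ ^ 2
      = n * ∑ i, ∑ j, ‖(M i j : ℂ) * C i j * x j‖ ^ 2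
      - (n : ℝ) * ∑ i, ∑ j, ‖(M i j : ℂ) * C i j * x j
        - (∑ j, (M i j : ℂ) * C i j * x j) / n‖ ^ 2 := by
    rw [Finset.sum_congr rfl (fun i _ => h2 i), Finset.sum_sub_distrib, Finset.mul_sum,
      Finset.mul_sum]
  rw [h3]
  have h4 : ∑ i, ∑ j, (1 - (M i j) ^ 2) * ‖C i j‖ ^ 2 * ‖x j‖ ^ 2
      = ∑ i, ∑ j, ‖C i j‖ ^ 2 * ‖x j‖ ^ 2 - ∑ i, ∑ j, ‖(M i j : ℂ) * C i j * x j‖ ^ 2 := by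
    simp only [← Finset.sum_sub_distrib]
    refine Finset.sum_congr rfl fun i _ => Finset.sum_congr rfl fun j _ => ?_
    rw [norm_mul, norm_mul, Complex.norm_real, mul_pow, mul_pow, Real.norm_eq_abs, sq_abs]
    ring
  have h5 : ∑ j, (1 - ∑ i, ‖C i j‖ ^ 2) * ‖x j‖ ^ 2
      = ∑ j, ‖x j‖ ^ 2 - ∑ i, ∑ j, ‖C i j‖ ^ 2 * ‖x j‖ ^ 2 := by
    rw [Finset.sum_comm, ← Finset.sum_sub_distrib]
    refine Finset.sum_congr rfl fun j _ => ?_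
    rw [sub_mul, one_mul, Finset.sum_mul]
  rw [h4, h5]
  ring

open scoped Matrix.Norms.L2Operator in
theorem exists_attain {n : ℕ} (A : Matrix (Fin n) (Fin n) ℂ) :
    ∃ x : Fin n → ℂ, ∑ j, ‖x j‖ ^ 2 ≤ 1 ∧ ∑ i, ‖A.mulVec x i‖ ^ 2 = ‖A‖ ^ 2 := by
  set T : EuclideanSpace ℂ (Fin n) →L[ℂ] EuclideanSpace ℂ (Fin n) :=
    LinearMap.toContinuousLinearMap (Matrix.toEuclideanLin A) with hT
  have hc : IsCompact ((fun x => ‖T x‖) '' Metric.closedBall 0 1) :=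
    (isCompact_closedBall _ _).image (by fun_prop)
  have hm := hc.sSup_mem ⟨_, 0, by simp, rfl⟩
  rw [T.sSup_unitClosedBall_eq_norm] at hm
  obtain ⟨x, hx, hxT⟩ := hm
  refine ⟨x.ofLp, ?_, ?_⟩
  · have : ‖x‖ ≤ 1 := by simpa using hx
    have h2 := pow_le_pow_left₀ (norm_nonneg _) this 2
    rw [EuclideanSpace.norm_sq_eq] at h2
    simpa using h2
  · have h : ‖T‖ = ‖A‖ := copNorm_eq_l2 A
    rw [← h, ← hxT, EuclideanSpace.norm_sq_eq]
    rfl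

open scoped Matrix.Norms.L2Operator in
theorem had_norm_le {n : ℕ} (hn : 0 < n) (M : Matrix (Fin n) (Fin n) ℝ) (hM : ∀ i j, |M i j| ≤ 1)
    (C : Matrix (Fin n) (Fin n) ℂ) (hC : ‖C‖ ≤ 1) :
    ‖(M.map Complex.ofReal).hadamard C‖ ≤ Real.sqrt n := by
  obtain ⟨x, hx, hA⟩ := exists_attain ((M.map Complex.ofReal).hadamard C)
  have h := slack_id hn M C x
  rw [hA] at h
  have p0 : (0 : ℝ) < n := by exact_mod_cast hn
  have p2 : 0 ≤ ∑ i, ∑ j, (1 - (M i j) ^ 2) * ‖C i j‖ ^ 2 * ‖x j‖ ^ 2 :=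
    Finset.sum_nonneg fun i _ => Finset.sum_nonneg fun j _ => by
      have : (M i j) ^ 2 ≤ 1 := (sq_le_one_iff_abs_le_one _).2 (hM i j)
      have : 0 ≤ 1 - (M i j) ^ 2 := by linarith
      positivity
  have p3 : 0 ≤ ∑ j, (1 - ∑ i, ‖C i j‖ ^ 2) * ‖x j‖ ^ 2 :=
    Finset.sum_nonneg fun j _ => by
      have : 0 ≤ 1 - ∑ i, ‖C i j‖ ^ 2 := by linarith [col_le C hC j]
      positivity
  have p1 : 0 ≤ ∑ i, ∑ j, ‖(M i j : ℂ) * C i j * x j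
          - (((M.map Complex.ofReal).hadamard C).mulVec x i) / n‖ ^ 2 :=
    Finset.sum_nonneg fun _ _ => Finset.sum_nonneg fun _ _ => sq_nonneg _
  apply Real.le_sqrt_of_sq_le
  have q1 := mul_nonneg p0.le p1
  have q2 := mul_nonneg p0.le p2
  have q3 := mul_nonneg p0.le p3
  have q4 := mul_le_mul_of_nonneg_left hx p0.le
  linarith

open scoped Matrix.Norms.L2Operator in
theorem had_of_eq {n : ℕ} (hn : 0 < n) (M : Matrix (Fin n) (Fin n) ℝ) (hM : ∀ i j, |M i j| ≤ 1)
    (C : Matrix (Fin n) (Fin n) ℂ) (hC : ‖C‖ ≤ 1)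
    (hE : ‖(M.map Complex.ofReal).hadamard C‖ = Real.sqrt n) :
    (∀ i j, M i j = 1 ∨ M i j = -1) ∧ M.transpose * M = (n : ℝ) • 1 := by
  obtain ⟨x, hx, hA⟩ := exists_attain ((M.map Complex.ofReal).hadamard C)
  have h := slack_id hn M C x
  have p0 : (0 : ℝ) < n := by exact_mod_cast hn
  rw [hE, Real.sq_sqrt p0.le] at hA
  rw [hA] at h
  have pM : ∀ i j, 0 ≤ 1 - (M i j) ^ 2 := fun i j => by
    have : (M i j) ^ 2 ≤ 1 := (sq_le_one_iff_abs_le_one _).2 (hM i j)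
    linarith
  have pC : ∀ j, 0 ≤ 1 - ∑ i, ‖C i j‖ ^ 2 := fun j => by linarith [col_le C hC j]
  have p2' : ∀ i j, 0 ≤ (1 - (M i j) ^ 2) * ‖C i j‖ ^ 2 * ‖x j‖ ^ 2 := fun i j => by
    have := pM i j; positivity
  have p3' : ∀ j, 0 ≤ (1 - ∑ i, ‖C i j‖ ^ 2) * ‖x j‖ ^ 2 := fun j => by
    have := pC j; positivity
  have p2 : 0 ≤ ∑ i, ∑ j, (1 - (M i j) ^ 2) * ‖C i j‖ ^ 2 * ‖x j‖ ^ 2 :=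
    Finset.sum_nonneg fun i _ => Finset.sum_nonneg fun j _ => p2' i j
  have p3 : 0 ≤ ∑ j, (1 - ∑ i, ‖C i j‖ ^ 2) * ‖x j‖ ^ 2 := Finset.sum_nonneg fun j _ => p3' j
  set y := ((M.map Complex.ofReal).hadamard C).mulVec x with hy
  have p1 : 0 ≤ ∑ i, ∑ j, ‖(M i j : ℂ) * C i j * x j - y i / n‖ ^ 2 :=
    Finset.sum_nonneg fun _ _ => Finset.sum_nonneg fun _ _ => sq_nonneg _
  have q1 := mul_nonneg p0.le p1
  have q2 := mul_nonneg p0.le p2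
  have q3 := mul_nonneg p0.le p3
  have q4 := mul_le_mul_of_nonneg_left hx p0.le
  have z1 : ∑ i, ∑ j, ‖(M i j : ℂ) * C i j * x j - y i / n‖ ^ 2 = 0 := by
    have : (n : ℝ) * ∑ i, ∑ j, ‖(M i j : ℂ) * C i j * x j - y i / n‖ ^ 2 = 0 := by linarith
    exact (mul_eq_zero.mp this).resolve_left p0.ne'
  have z2 : ∑ i, ∑ j, (1 - (M i j) ^ 2) * ‖C i j‖ ^ 2 * ‖x j‖ ^ 2 = 0 := by
    have : (n : ℝ) * ∑ i, ∑ j, (1 - (M i j) ^ 2) * ‖C i j‖ ^ 2 * ‖x j‖ ^ 2 = 0 := by linarith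
    exact (mul_eq_zero.mp this).resolve_left p0.ne'
  have z3 : ∑ j, (1 - ∑ i, ‖C i j‖ ^ 2) * ‖x j‖ ^ 2 = 0 := by
    have : (n : ℝ) * ∑ j, (1 - ∑ i, ‖C i j‖ ^ 2) * ‖x j‖ ^ 2 = 0 := by linarith
    exact (mul_eq_zero.mp this).resolve_left p0.ne'
  have e1 : ∀ i j, (M i j : ℂ) * C i j * x j = y i / n := by
    intro i j
    have a := (Finset.sum_eq_zero_iff_of_nonneg (fun _ _ => Finset.sum_nonneg fun _ _ => sq_nonneg _)).1 z1 i
      (Finset.mem_univ _)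
    have b := (Finset.sum_eq_zero_iff_of_nonneg (fun _ _ => sq_nonneg _)).1 a j
      (Finset.mem_univ _)
    have c := norm_eq_zero.mp (pow_eq_zero_iff (two_ne_zero)|>.1 b)
    exact sub_eq_zero.mp c
  have e2 : ∀ i j, (1 - (M i j) ^ 2) * ‖C i j‖ ^ 2 * ‖x j‖ ^ 2 = 0 := by
    intro i j
    have a := (Finset.sum_eq_zero_iff_of_nonneg
      (fun i _ => Finset.sum_nonneg fun j _ => p2' i j)).1 z2 i (Finset.mem_univ _)
    exact (Finset.sum_eq_zero_iff_of_nonneg (fun j _ => p2' i j)).1 a j (Finset.mem_univ _)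
  have e3 : ∀ j, (1 - ∑ i, ‖C i j‖ ^ 2) * ‖x j‖ ^ 2 = 0 := by
    intro j
    exact (Finset.sum_eq_zero_iff_of_nonneg (fun j _ => p3' j)).1 z3 j (Finset.mem_univ _)
  have hn' : (n : ℂ) ≠ 0 := by exact_mod_cast hn.ne'
  obtain ⟨i₀, hi₀⟩ : ∃ i, y i ≠ 0 := by
    by_contra! hcon
    have h0 : ∑ i, ‖y i‖ ^ 2 = 0 := Finset.sum_eq_zero fun i _ => by rw [hcon i]; simp
    linarith
  have hx0 : ∀ j, x j ≠ 0 := by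
    intro j hj
    have := e1 i₀ j
    rw [hj, mul_zero] at this
    exact div_ne_zero hi₀ hn' this.symm
  have hcol : ∀ j, ∑ i, ‖C i j‖ ^ 2 = 1 := by
    intro j
    have := (mul_eq_zero.mp (e3 j)).resolve_right (by have := norm_pos_iff.2 (hx0 j); positivity)
    linarith
  have hU := isometry_of_cols C hC hcol
  have hU' : C * C.conjTranspose = 1 := mul_eq_one_comm.mp hU
  have hrow : ∀ i, ∑ j, ‖C i j‖ ^ 2 = 1 := by
    intro i
    have := congrFun (congrFun hU' i) i
    rw [Matrix.mul_apply, Matrix.one_apply_eq] at this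
    have h2 : ((∑ j, ‖C i j‖ ^ 2 : ℝ) : ℂ) = 1 := by
      rw [← this, Complex.ofReal_sum]
      refine Finset.sum_congr rfl fun j _ => ?_
      rw [Matrix.conjTranspose_apply, ← Complex.normSq_eq_norm_sq, ← Complex.mul_conj]
      rfl
    exact_mod_cast h2
  have e4 : ∀ i j, ‖C i j‖ ^ 2 * ‖x j‖ ^ 2 = ‖y i / n‖ ^ 2 := by
    intro i j
    have a := e2 i j
    rw [← e1 i j, norm_mul, norm_mul, Complex.norm_real, mul_pow, mul_pow, Real.norm_eq_abs, sq_abs]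
    linarith
  have e5 : ∀ i j, ‖C i j‖ ^ 2 = ‖y i / n‖ ^ 2 * (‖x j‖ ^ 2)⁻¹ := by
    intro i j
    have := norm_pos_iff.2 (hx0 j)
    rw [← e4 i j]; field_simp
  have e6 : ∀ i, ‖y i / n‖ ^ 2 * ∑ j, (‖x j‖ ^ 2)⁻¹ = 1 := by
    intro i
    rw [Finset.mul_sum, ← hrow i]
    exact Finset.sum_congr rfl fun j _ => (e5 i j).symm
  have hW : ∑ j, (‖x j‖ ^ 2)⁻¹ ≠ 0 := fun h0 => by simpa [h0] using e6 i₀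
  set t : ℝ := (∑ j, (‖x j‖ ^ 2)⁻¹)⁻¹ with ht
  have e7 : ∀ i, ‖y i / n‖ ^ 2 = t := fun i => eq_inv_of_mul_eq_one_left (e6 i)
  have ht0 : t ≠ 0 := inv_ne_zero hW
  have e8 : ∀ j, ‖x j‖ ^ 2 = n * t := by
    intro j
    have a := hcol j
    simp only [e5, e7] at a
    simp only [Finset.sum_const, Finset.card_univ, Fintype.card_fin, nsmul_eq_mul] at a
    have := norm_pos_iff.2 (hx0 j)
    field_simp at a
    linarith
  have hC0 : ∀ i j, ‖C i j‖ ^ 2 ≠ 0 := by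
    intro i j h0
    have := e4 i j
    rw [h0, e7, zero_mul] at this
    exact ht0 this.symm
  have hx0' : ∀ j, ‖x j‖ ^ 2 ≠ 0 := fun j => by have := norm_pos_iff.2 (hx0 j); positivity
  have hM1 : ∀ i j, M i j ^ 2 = 1 := by
    intro i j
    have := (mul_eq_zero.mp ((mul_eq_zero.mp (e2 i j)).resolve_right (hx0' j))).resolve_right
      (hC0 i j)
    linarith
  refine ⟨fun i j => mul_self_eq_one_iff.1 (by rw [← pow_two]; exact hM1 i j), ?_⟩
  ext j k
  rw [Matrix.mul_apply, Matrix.smul_apply]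
  by_cases hjk : j = k
  · subst hjk
    simp [← pow_two, hM1]
  · rw [Matrix.one_apply_ne hjk, smul_zero]
    have a := congrFun (congrFun hU j) k
    rw [Matrix.one_apply_ne hjk, Matrix.mul_apply] at a
    have b : ∀ i, (M i j : ℂ) * M i k * t = star (C i j) * C i k * (star (x j) * x k) := by
      intro i
      have h1 : ((t : ℝ) : ℂ) = star (y i / n) * (y i / n) := by
        rw [← e7 i, ← Complex.normSq_eq_norm_sq, ← Complex.mul_conj, mul_comm]; rfl
      have s1 : (M i j : ℂ) * (M i j : ℂ) = 1 := by
        have := hM1 i j; rw [pow_two] at this; exact_mod_cast this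
      have s2 : (M i k : ℂ) * (M i k : ℂ) = 1 := by
        have := hM1 i k; rw [pow_two] at this; exact_mod_cast this
      have sM : star (M i j : ℂ) = M i j := Complex.conj_ofReal _
      rw [h1]
      nth_rewrite 1 [← e1 i j]
      rw [← e1 i k, star_mul', star_mul', sM]
      linear_combination (M i k * M i k * star (C i j) * star (x j) * C i k * x k) * s1
        + (star (C i j) * star (x j) * C i k * x k) * s2
    have c : ((∑ i, M i j * M i k : ℝ) : ℂ) * t = 0 := by
      push_cast
      rw [Finset.sum_mul, Finset.sum_congr rfl (fun i _ => b i), ← Finset.sum_mul]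
      simp only [Matrix.conjTranspose_apply] at a
      rw [a, zero_mul]
    have d : (∑ i, M i j * M i k) * t = 0 := by exact_mod_cast c
    simpa using (mul_eq_zero.mp d).resolve_right ht0

open scoped Matrix.Norms.L2Operator in
theorem schur_attain {n : ℕ} (M : Matrix (Fin n) (Fin n) ℂ) :
    ∃ C : Matrix (Fin n) (Fin n) ℂ, ‖C‖ ≤ 1 ∧ ‖M.hadamard C‖ = Matrix.schurNorm M := by
  have hcont : Continuous (fun C : Matrix (Fin n) (Fin n) ℂ => M.hadamard C) := by
    refine continuous_matrix fun i j => ?_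
    simp only [Matrix.hadamard_apply]
    exact continuous_const.mul (continuous_id.matrix_elem i j)
  have : ProperSpace (Matrix (Fin n) (Fin n) ℂ) := FiniteDimensional.proper ℂ _
  have hc : IsCompact ((fun C => ‖M.hadamard C‖) ''
      Metric.closedBall (0 : Matrix (Fin n) (Fin n) ℂ) 1) :=
    (isCompact_closedBall _ _).image (continuous_norm.comp hcont)
  have hm := hc.sSup_mem ⟨_, 0, by simp, rfl⟩
  obtain ⟨C, hC, h⟩ := hm
  refine ⟨C, by simpa using hC, ?_⟩
  refine h.trans ?_
  unfold Matrix.schurNorm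
  congr 1
  ext r
  simp only [copNorm_eq_l2, Set.mem_image, Metric.mem_closedBall, dist_zero_right, Set.mem_setOf_eq]
  exact exists_congr fun _ => and_congr_right fun _ => eq_comm

/-- There is an `n × n` real matrix with entries of absolute value at most `1` whose Schur
norm equals `√n` if and only if there exists an `n × n` Hadamard matrix (a `±1` matrix `H`
with `Hᵀ * H = n • I`). -/
theorem rn_eq_sqrt_iff_hadamard (n : ℕ) (hn : 0 < n) :
    (∃ M : Matrix (Fin n) (Fin n) ℝ, (∀ i j, |M i j| ≤ 1) ∧
        Matrix.schurNorm (M.map Complex.ofReal) = Real.sqrt n) ↔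
      ∃ H : Matrix (Fin n) (Fin n) ℝ, (∀ i j, H i j = 1 ∨ H i j = -1) ∧
        H.transpose * H = (n : ℝ) • 1 := by
  open scoped Matrix.Norms.L2Operator in
  constructor
  · rintro ⟨M, hM, hS⟩
    obtain ⟨C, hC, hE⟩ := schur_attain (M.map Complex.ofReal)
    exact ⟨M, had_of_eq hn M hM C hC (hE.trans hS)⟩
  · rintro ⟨H, hH, hHH⟩
    have p0 : (0 : ℝ) < n := by exact_mod_cast hn
    have hM : ∀ i j, |H i j| ≤ 1 := fun i j => by rcases hH i j with h | h <;> simp [h]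
    refine ⟨H, hM, ?_⟩
    have hs : 0 < Real.sqrt n := Real.sqrt_pos.2 p0
    have hss : Real.sqrt n * Real.sqrt n = n := Real.mul_self_sqrt p0.le
    apply le_antisymm
    · obtain ⟨C, hC, hE⟩ := schur_attain (H.map Complex.ofReal)
      rw [← hE]
      exact had_norm_le hn H hM C hC
    · set C : Matrix (Fin n) (Fin n) ℂ := (H.map (fun r => ((r / Real.sqrt n : ℝ) : ℂ))) with hCd
      have hCC : C.conjTranspose * C = 1 := by
        ext j k
        have a := congrFun (congrFun hHH j) k
        rw [Matrix.mul_apply, Matrix.smul_apply] at a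
        simp only [Matrix.transpose_apply] at a
        have b : (C.conjTranspose * C) j k = (((∑ i, H i j * H i k) / n : ℝ) : ℂ) := by
          rw [Matrix.mul_apply, Finset.sum_div, Complex.ofReal_sum]
          refine Finset.sum_congr rfl fun i _ => ?_
          rw [Matrix.conjTranspose_apply]
          simp only [hCd, Matrix.map_apply]
          have : star ((H i j / Real.sqrt n : ℝ) : ℂ) = ((H i j / Real.sqrt n : ℝ) : ℂ) :=
            Complex.conj_ofReal _
          rw [this, ← Complex.ofReal_mul, div_mul_div_comm, hss]
        rw [b, a]
        by_cases hjk : j = k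
        · subst hjk; simp [p0.ne']
        · simp [Matrix.one_apply_ne hjk]
      have hCn : ‖C‖ ≤ 1 := by
        have h1 := Matrix.l2_opNorm_conjTranspose_mul_self C
        rw [hCC] at h1
        have : Nonempty (Fin n) := ⟨⟨0, hn⟩⟩
        have h2 : ‖(1 : Matrix (Fin n) (Fin n) ℂ)‖ = 1 := norm_one
        nlinarith [norm_nonneg C]
      have hb : BddAbove {x | ∃ C : Matrix (Fin n) (Fin n) ℂ, Matrix.copNorm C ≤ 1 ∧
          x = Matrix.copNorm (Matrix.hadamard (H.map Complex.ofReal) C)} := by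
        refine ⟨Real.sqrt n, ?_⟩
        rintro _ ⟨D, hD, rfl⟩
        rw [copNorm_eq_l2] at hD ⊢
        exact had_norm_le hn H hM D hD
      refine le_trans ?_ (le_csSup hb ⟨C, by rwa [copNorm_eq_l2], rfl⟩)
      rw [copNorm_eq_l2]
      have h1 := mulVec_sq_le ((H.map Complex.ofReal).hadamard C) (fun _ => 1)
      have h2 : ∀ i, ((H.map Complex.ofReal).hadamard C).mulVec (fun _ => 1) i
          = ((Real.sqrt n : ℝ) : ℂ) := by
        intro i
        have h3 : ∀ j, H i j * (H i j / Real.sqrt n) = 1 / Real.sqrt n := by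
          intro j; rcases hH i j with h | h <;> simp [h] <;> ring
        simp only [Matrix.mulVec, dotProduct, Matrix.hadamard_apply, hCd, Matrix.map_apply, mul_one,
          ← Complex.ofReal_mul, h3, Finset.sum_const, Finset.card_univ, Fintype.card_fin,
          nsmul_eq_mul]
        rw [← Complex.ofReal_natCast, ← Complex.ofReal_mul]
        congr 1
        field_simp
        rw [pow_two, hss]
      simp only [h2, Complex.norm_real, Real.norm_eq_abs, sq_abs, Real.sq_sqrt p0.le,
        Finset.sum_const, Finset.card_univ, Fintype.card_fin, nsmul_eq_mul, norm_one, one_pow,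
        mul_one] at h1
      rw [Real.sqrt_le_left (norm_nonneg _)]
      nlinarith
end

section
/- The limit of r_n/√n as n → ∞ equals 1. -/
open scoped ComplexOrder

open scoped Matrix.Norms.L2Operator Kronecker

lemma aux_copNorm_eq {n : ℕ} (M : Matrix (Fin n) (Fin n) ℂ) : M.copNorm = ‖M‖ := rfl

lemma aux_col {n : ℕ} (C : Matrix (Fin n) (Fin n) ℂ) (hC : C.copNorm ≤ 1) (j : Fin n) :
    ∑ i, ‖C i j‖ ^ 2 ≤ 1 := by
  have h := (LinearMap.toContinuousLinearMap (Matrix.toEuclideanLin C)).le_opNorm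
    (EuclideanSpace.single j 1)
  have h2 : ‖(LinearMap.toContinuousLinearMap (Matrix.toEuclideanLin C))
    (EuclideanSpace.single j 1)‖ ≤ 1 := by
    refine h.trans ?_
    simpa [Matrix.copNorm] using hC
  have h3 := pow_le_one₀ (norm_nonneg _) h2 (n := 2)
  rw [EuclideanSpace.norm_sq_eq] at h3
  simpa [Matrix.toLpLin_apply] using h3

lemma aux_upper {n : ℕ} (M : Matrix (Fin n) (Fin n) ℝ) (hM : ∀ i j, |M i j| ≤ 1)
    (C : Matrix (Fin n) (Fin n) ℂ) (hC : C.copNorm ≤ 1) :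
    (Matrix.hadamard (M.map Complex.ofReal) C).copNorm ≤ Real.sqrt n := by
  refine ContinuousLinearMap.opNorm_le_bound _ (Real.sqrt_nonneg _) fun x => ?_
  refine (sq_le_sq₀ (norm_nonneg _) (by positivity)).mp ?_
  rw [mul_pow, Real.sq_sqrt (Nat.cast_nonneg n), EuclideanSpace.norm_sq_eq,
    EuclideanSpace.norm_sq_eq]
  have key : ∀ i, ‖(LinearMap.toContinuousLinearMap (Matrix.toEuclideanLin
      (Matrix.hadamard (M.map Complex.ofReal) C)) x) i‖ ^ 2 ≤
      n * ∑ j, ‖C i j‖ ^ 2 * ‖x j‖ ^ 2 := by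
    intro i
    have e : (LinearMap.toContinuousLinearMap (Matrix.toEuclideanLin
      (Matrix.hadamard (M.map Complex.ofReal) C)) x) i = ∑ j, (M i j : ℂ) * C i j * x j := by
      simp [Matrix.toLpLin_apply, Matrix.mulVec, dotProduct]
    rw [e]
    have h1 : ‖∑ j, (M i j : ℂ) * C i j * x j‖ ≤ ∑ j, ‖C i j‖ * ‖x j‖ := by
      refine (norm_sum_le _ _).trans (Finset.sum_le_sum fun j _ => ?_)
      rw [norm_mul, norm_mul, Complex.norm_real, Real.norm_eq_abs]
      exact mul_le_mul_of_nonneg_right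
        (mul_le_of_le_one_left (norm_nonneg _) (hM i j)) (norm_nonneg _)
    calc _ ≤ (∑ j, ‖C i j‖ * ‖x j‖) ^ 2 := by gcongr
      _ ≤ (Finset.univ : Finset (Fin n)).card * ∑ j, (‖C i j‖ * ‖x j‖) ^ 2 :=
        sq_sum_le_card_mul_sum_sq
      _ = _ := by simp [mul_pow]
  calc _ ≤ ∑ i, n * ∑ j, ‖C i j‖ ^ 2 * ‖x j‖ ^ 2 := Finset.sum_le_sum fun i _ => key i
    _ = n * ∑ j, (∑ i, ‖C i j‖ ^ 2) * ‖x j‖ ^ 2 := by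
      rw [← Finset.mul_sum, Finset.sum_comm]
      simp_rw [Finset.sum_mul]
    _ ≤ n * ∑ j, ‖x j‖ ^ 2 := by
      gcongr with j
      exact mul_le_of_le_one_left (by positivity) (aux_col C hC j)

lemma aux_schur_le {n : ℕ} (M : Matrix (Fin n) (Fin n) ℝ) (hM : ∀ i j, |M i j| ≤ 1) :
    Matrix.schurNorm (M.map Complex.ofReal) ≤ Real.sqrt n := by
  apply Real.sSup_le _ (Real.sqrt_nonneg _)
  rintro x ⟨C, hC, rfl⟩
  exact aux_upper M hM C hC

lemma aux_r_le (n : ℕ) : rSchur n ≤ Real.sqrt n := by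
  apply Real.sSup_le _ (Real.sqrt_nonneg _)
  rintro x ⟨M, hM, rfl⟩
  exact aux_schur_le M hM

lemma aux_le_r {n : ℕ} (M : Matrix (Fin n) (Fin n) ℝ) (hM : ∀ i j, |M i j| ≤ 1)
    (C : Matrix (Fin n) (Fin n) ℂ) (hC : C.copNorm ≤ 1) :
    (Matrix.hadamard (M.map Complex.ofReal) C).copNorm ≤ rSchur n := by
  have h1 : (Matrix.hadamard (M.map Complex.ofReal) C).copNorm ≤
      Matrix.schurNorm (M.map Complex.ofReal) := by
    refine le_csSup ⟨Real.sqrt n, ?_⟩ ⟨C, hC, rfl⟩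
    rintro x ⟨C, hC, rfl⟩
    exact aux_upper M hM C hC
  refine h1.trans (le_csSup ⟨Real.sqrt n, ?_⟩ ⟨M, hM, rfl⟩)
  rintro x ⟨M, hM, rfl⟩
  exact aux_schur_le M hM

/-- Existence of a Hadamard matrix of order `m`. -/
def AuxHad (m : ℕ) : Prop :=
  ∃ H : Matrix (Fin m) (Fin m) ℤ, (∀ i j, H i j * H i j = 1) ∧ H.transpose * H = (m : Matrix (Fin m) (Fin m) ℤ)

lemma AuxHad.mul {m n : ℕ} (hm : AuxHad m) (hn : AuxHad n) : AuxHad (m * n) := by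
  obtain ⟨H, h1, h2⟩ := hm
  obtain ⟨K, k1, k2⟩ := hn
  refine ⟨(H ⊗ₖ K).submatrix finProdFinEquiv.symm finProdFinEquiv.symm, ?_, ?_⟩
  · intro i j
    simp only [Matrix.submatrix_apply, Matrix.kroneckerMap_apply]
    rw [mul_mul_mul_comm, h1, k1, one_mul]
  · rw [Matrix.transpose_submatrix, Matrix.submatrix_mul_equiv, ← Matrix.kroneckerMap_transpose,
      ← Matrix.mul_kronecker_mul, h2, k2, Matrix.natCast_kronecker_natCast]
    ext i j
    simp only [Matrix.submatrix_apply, Matrix.natCast_apply, finProdFinEquiv.symm.injective.eq_iff]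

lemma auxHad_one : AuxHad 1 := ⟨1, by decide, by decide⟩

lemma auxHad_two : AuxHad 2 := ⟨!![1, 1; 1, -1], by decide, by decide⟩

lemma auxHad_twelve : AuxHad 12 :=
  ⟨!![1, 1, 1, 1, 1, 1, 1, 1, 1, 1, 1, 1;
    -1, 1, 1, -1, 1, 1, 1, -1, -1, -1, 1, -1;
    -1, -1, 1, 1, -1, 1, 1, 1, -1, -1, -1, 1;
    -1, 1, -1, 1, 1, -1, 1, 1, 1, -1, -1, -1;
    -1, -1, 1, -1, 1, 1, -1, 1, 1, 1, -1, -1;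
    -1, -1, -1, 1, -1, 1, 1, -1, 1, 1, 1, -1;
    -1, -1, -1, -1, 1, -1, 1, 1, -1, 1, 1, 1;
    -1, 1, -1, -1, -1, 1, -1, 1, 1, -1, 1, 1;
    -1, 1, 1, -1, -1, -1, 1, -1, 1, 1, -1, 1;
    -1, 1, 1, 1, -1, -1, -1, 1, -1, 1, 1, -1;
    -1, -1, 1, 1, 1, -1, -1, -1, 1, -1, 1, 1;
    -1, 1, -1, 1, 1, 1, -1, -1, -1, 1, -1, 1], by decide +kernel, by decide +kernel⟩

lemma auxHad_pow (a b : ℕ) : AuxHad (2 ^ a * 12 ^ b) := by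
  have h : ∀ {m : ℕ}, AuxHad m → ∀ k, AuxHad (m ^ k) := by
    intro m hm k
    induction k with
    | zero => exact auxHad_one
    | succ k ih => exact ih.mul hm
  exact (h auxHad_two a).mul (h auxHad_twelve b)

lemma aux_lower {m k : ℕ} (hm : 0 < m) (h : AuxHad m) : Real.sqrt m ≤ rSchur (m + k) := by
  obtain ⟨H, h1, h2⟩ := h
  have hm' : (0 : ℝ) < m := by exact_mod_cast hm
  have hs : 0 < Real.sqrt m := Real.sqrt_pos.mpr hm'
  have hss : ((Real.sqrt m : ℝ) : ℂ) * (Real.sqrt m : ℝ) = m := by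
    rw [← Complex.ofReal_mul, Real.mul_self_sqrt hm'.le]; simp
  have hs0 : ((Real.sqrt m : ℝ) : ℂ) ≠ 0 := by exact_mod_cast hs.ne'
  let e : Fin (m + k) ≃ Fin m ⊕ Fin k := finSumFinEquiv.symm
  let M : Matrix (Fin (m + k)) (Fin (m + k)) ℝ :=
    (Matrix.fromBlocks (H.map (Int.cast : ℤ → ℝ)) 0 0 0).submatrix e e
  let HC : Matrix (Fin m) (Fin m) ℂ := H.map (Int.cast : ℤ → ℂ)
  let C : Matrix (Fin (m + k)) (Fin (m + k)) ℂ :=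
    (((Real.sqrt m : ℝ) : ℂ)⁻¹) • (Matrix.fromBlocks HC 0 0 0).submatrix e e
  let J : Matrix (Fin m) (Fin m) ℂ := Matrix.of fun _ _ => 1
  have hHC : HC.conjTranspose * HC = (m : Matrix (Fin m) (Fin m) ℂ) := by
    have := congrArg (fun X => X.map (Int.castRingHom ℂ)) h2
    simp only [Matrix.map_mul] at this
    convert this using 1
    · congr 1
      ext i j
      simp [HC]
    · ext i j
      simp [Matrix.natCast_apply]
  have hM : ∀ i j, |M i j| ≤ 1 := by
    intro i j
    simp only [M, Matrix.submatrix_apply]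
    rcases e i with i | i <;> rcases e j with j | j <;> simp
    rcases mul_self_eq_one_iff.mp (h1 i j) with h | h <;> simp [h]
  have hC : C.copNorm ≤ 1 := by
    have hd : C.conjTranspose * C =
        Matrix.diagonal (fun i => Sum.elim (fun _ => (1 : ℂ)) (fun _ => 0) (e i)) := by
      simp only [C, Matrix.conjTranspose_smul, Matrix.conjTranspose_submatrix,
        Matrix.smul_mul, Matrix.mul_smul, Matrix.submatrix_mul_equiv,
        Matrix.fromBlocks_conjTranspose, Matrix.fromBlocks_multiply, smul_smul]
      ext i j
      simp only [Matrix.smul_apply, Matrix.submatrix_apply, Matrix.diagonal_apply,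
        ← e.injective.eq_iff (a := i)]
      rcases e i with i | i <;> rcases e j with j | j <;> simp [hHC, Matrix.natCast_apply]
      refine if_congr Iff.rfl ?_ rfl
      rw [← hss]; field_simp
    have h3 := Matrix.l2_opNorm_conjTranspose_mul_self C
    rw [hd, Matrix.l2_opNorm_diagonal] at h3
    have h4 : ‖(fun i => Sum.elim (fun _ => (1 : ℂ)) (fun _ => 0) (e i))‖ ≤ 1 := by
      refine (pi_norm_le_iff_of_nonneg zero_le_one).mpr fun i => ?_
      rcases e i with i | i <;> simp
    rw [aux_copNorm_eq]
    nlinarith [norm_nonneg C]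
  have hN := aux_le_r M hM C hC
  refine le_trans ?_ hN
  set N := Matrix.hadamard (M.map Complex.ofReal) C with hNdef
  have hNe : N = (((Real.sqrt m : ℝ) : ℂ)⁻¹) • (Matrix.fromBlocks J 0 0 0).submatrix e e := by
    ext i j
    simp only [hNdef, M, C, Matrix.hadamard_apply, Matrix.map_apply, Matrix.smul_apply,
      Matrix.submatrix_apply]
    rcases e i with i | i <;> rcases e j with j | j <;> simp [HC, J]
    rw [mul_left_comm, ← Int.cast_mul, h1]; simp
  have hNN : N * N = ((Real.sqrt m : ℝ) : ℂ) • N := by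
    rw [hNe]
    simp only [Matrix.smul_mul, Matrix.mul_smul, Matrix.submatrix_mul_equiv,
        Matrix.fromBlocks_multiply, smul_smul]
    ext i j
    simp only [Matrix.smul_apply, Matrix.submatrix_apply]
    rcases e i with i | i <;> rcases e j with j | j <;> simp [J, Matrix.mul_apply]
    rw [← hss]; field_simp
  have hN0 : N ≠ 0 := by
    intro h0
    have := congrFun (congrFun h0 (e.symm (Sum.inl ⟨0, hm⟩))) (e.symm (Sum.inl ⟨0, hm⟩))
    rw [hNe] at this
    simp [J] at this
    omega
  have h5 := norm_mul_le N N
  rw [hNN, norm_smul, Complex.norm_real, Real.norm_of_nonneg hs.le] at h5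
  exact le_of_mul_le_mul_right h5 (norm_pos_iff.mpr hN0)

lemma aux_dens (A B δ : ℝ) (hA : 0 < A) (p q : ℕ) (h0 : 0 < q * B - p * A)
    (h1 : q * B - p * A < δ) :
    ∃ T : ℝ, ∀ t ≥ T, ∃ a b : ℕ, t - δ < a * A + b * B ∧ a * A + b * B ≤ t := by
  set u := q * B - p * A with hu
  refine ⟨A * (p * (A / u) + 1), fun t ht => ?_⟩
  have hT : p * (A / u) + 1 ≤ t / A := by rw [le_div_iff₀ hA]; linarith
  have hpos : 0 ≤ p * (A / u) := by positivity
  have k1 := Nat.floor_le (show 0 ≤ t / A by linarith)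
  have k2 := Nat.lt_floor_add_one (t / A)
  set k := ⌊t / A⌋₊
  have k1' : k * A ≤ t := by rwa [le_div_iff₀ hA] at k1
  have k2' : t < (k + 1) * A := by rwa [div_lt_iff₀ hA] at k2
  have j1 := Nat.floor_le (show 0 ≤ (t - k * A) / u from div_nonneg (by linarith) h0.le)
  have j2 := Nat.lt_floor_add_one ((t - k * A) / u)
  set j := ⌊(t - k * A) / u⌋₊
  have j3 : (j : ℝ) ≤ A / u := j1.trans (by gcongr; linarith)
  rw [le_div_iff₀ h0] at j1
  rw [div_lt_iff₀ h0] at j2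
  have hkj : j * p ≤ k := by
    have : (j : ℝ) * p ≤ k := by
      have : (p : ℝ) * j ≤ p * (A / u) := by gcongr
      linarith
    exact_mod_cast this
  refine ⟨k - j * p, j * q, ?_⟩
  push_cast [Nat.cast_sub hkj]
  have : ((k : ℝ) - j * p) * A + j * q * B = k * A + j * u := by rw [hu]; ring
  rw [this]
  constructor <;> linarith

lemma aux_irr : Irrational (Real.log 2 / Real.log 12) := by
  rintro ⟨r, hr⟩
  have l2 : 0 < Real.log 2 := Real.log_pos (by norm_num)
  have l12 : 0 < Real.log 12 := Real.log_pos (by norm_num)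
  have hrpos : 0 < r := by
    have : (0 : ℝ) < r := by rw [hr]; positivity
    exact_mod_cast this
  have hnum : 0 < r.num := Rat.num_pos.mpr hrpos
  obtain ⟨p, hp⟩ := Int.eq_ofNat_of_zero_le hnum.le
  have hd : (0 : ℝ) < r.den := by exact_mod_cast r.den_pos
  have hr' : (r : ℝ) = p / r.den := by
    rw [Rat.cast_def, hp]; simp
  rw [hr', div_eq_div_iff hd.ne' l12.ne'] at hr
  have h : Real.log ((12 : ℝ) ^ p) = Real.log ((2 : ℝ) ^ r.den) := by
    rw [Real.log_pow, Real.log_pow]; linarith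
  have h' : (12 : ℝ) ^ p = 2 ^ r.den :=
    Real.log_injOn_pos (Set.mem_Ioi.mpr (by positivity)) (Set.mem_Ioi.mpr (by positivity)) h
  have h'' : 12 ^ p = 2 ^ r.den := by exact_mod_cast h'
  have hp0 : p ≠ 0 := by rintro rfl; simp [hp] at hnum
  have : 3 ∣ 2 ^ r.den := by
    rw [← h'']; exact dvd_pow (by norm_num) hp0
  have := Nat.prime_three.dvd_of_dvd_pow this
  omega

lemma aux_dens' (δ : ℝ) (hδ : 0 < δ) :
    ∃ T : ℝ, ∀ t ≥ T, ∃ a b : ℕ, t - δ < a * Real.log 2 + b * Real.log 12 ∧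
      a * Real.log 2 + b * Real.log 12 ≤ t := by
  have l2 : 0 < Real.log 2 := Real.log_pos (by norm_num)
  have l12 : 0 < Real.log 12 := Real.log_pos (by norm_num)
  have hd := dense_addSubgroupClosure_pair_iff.mpr aux_irr
  obtain ⟨x, ⟨hx0, hx1⟩, hx⟩ := hd.inter_open_nonempty (Set.Ioo 0 δ) isOpen_Ioo ⟨δ / 2, by constructor <;> linarith⟩
  obtain ⟨p, q, rfl⟩ := AddSubgroup.mem_closure_pair.mp hx
  simp only [zsmul_eq_mul] at hx0 hx1
  rcases le_or_gt 0 q with hq | hq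
  · rcases le_or_gt 0 p with hp | hp
    · rcases hp.eq_or_lt with rfl | hp
      · obtain ⟨q, rfl⟩ := Int.eq_ofNat_of_zero_le hq
        exact aux_dens _ _ δ l2 0 q (by simpa using hx0) (by simpa using hx1)
      · obtain ⟨q, rfl⟩ := Int.eq_ofNat_of_zero_le hq
        obtain ⟨p, rfl⟩ := Int.eq_ofNat_of_zero_le hp.le
        have hp1 : (1 : ℝ) ≤ p := by exact_mod_cast hp
        have : Real.log 2 < δ := by
          have : (0 : ℝ) ≤ q * Real.log 12 := by positivity
          push_cast at hx1
          nlinarith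
        obtain ⟨T, hT⟩ := aux_dens (Real.log 12) (Real.log 2) δ l12 0 1
          (by simpa using l2) (by simpa using this)
        refine ⟨T, fun t ht => ?_⟩
        obtain ⟨a, b, h⟩ := hT t ht
        exact ⟨b, a, by rwa [add_comm]⟩
    · obtain ⟨q, rfl⟩ := Int.eq_ofNat_of_zero_le hq
      obtain ⟨p', hp'⟩ := Int.eq_ofNat_of_zero_le (neg_nonneg.mpr hp.le)
      obtain rfl : p = -p' := by omega
      push_cast at hx0 hx1
      exact aux_dens _ _ δ l2 p' q (by linarith) (by linarith)
  · have hp : 0 ≤ p := by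
      by_contra! hp
      have : (p : ℝ) < 0 := by exact_mod_cast hp
      have : (q : ℝ) < 0 := by exact_mod_cast hq
      nlinarith
    obtain ⟨p, rfl⟩ := Int.eq_ofNat_of_zero_le hp
    obtain ⟨q', hq'⟩ := Int.eq_ofNat_of_zero_le (neg_nonneg.mpr hq.le)
    obtain rfl : q = -q' := by omega
    push_cast at hx0 hx1
    obtain ⟨T, hT⟩ := aux_dens (Real.log 12) (Real.log 2) δ l12 q' p
      (by linarith) (by linarith)
    refine ⟨T, fun t ht => ?_⟩
    obtain ⟨a, b, h⟩ := hT t ht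
    exact ⟨b, a, by rwa [add_comm]⟩

/-- `r n / √n → 1` as `n → ∞`. -/
theorem rSchur_div_sqrt_tendsto_one :
    Filter.Tendsto (fun n : ℕ => rSchur n / Real.sqrt n) Filter.atTop (nhds 1) := by
  rw [tendsto_order]
  constructor
  · intro c hc
    -- choose δ with exp (-δ/2) > c
    obtain ⟨δ, hδ, hcδ⟩ : ∃ δ : ℝ, 0 < δ ∧ c < Real.exp (-δ / 2) := by
      refine ⟨1 - c, by linarith, ?_⟩
      have := Real.add_one_le_exp (-(1 - c) / 2)
      linarith
    obtain ⟨T, hT⟩ := aux_dens' δ hδ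
    have hlog : Filter.Tendsto (fun n : ℕ => Real.log n) Filter.atTop Filter.atTop :=
      Real.tendsto_log_atTop.comp tendsto_natCast_atTop_atTop
    filter_upwards [hlog.eventually_ge_atTop T, Filter.eventually_gt_atTop 0] with n hn hn0
    have hn0' : (0 : ℝ) < n := by exact_mod_cast hn0
    obtain ⟨a, b, h1, h2⟩ := hT _ hn
    have hmpos : 0 < 2 ^ a * 12 ^ b := by positivity
    have hlogm : Real.log ((2 ^ a * 12 ^ b : ℕ) : ℝ) = a * Real.log 2 + b * Real.log 12 := by
      push_cast
      rw [Real.log_mul (by positivity) (by positivity), Real.log_pow, Real.log_pow]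
    have hH := auxHad_pow a b
    generalize 2 ^ a * 12 ^ b = m at *
    have hm' : (0 : ℝ) < m := by exact_mod_cast hmpos
    rw [← hlogm] at h1 h2
    have hmn : m ≤ n := by
      have := (Real.log_le_log_iff hm' hn0').mp h2
      exact_mod_cast this
    obtain ⟨k, rfl⟩ := Nat.exists_eq_add_of_le hmn
    have hl := aux_lower (k := k) hmpos hH
    rw [lt_div_iff₀ (Real.sqrt_pos.mpr hn0')]
    refine lt_of_lt_of_le ?_ hl
    have hsn := Real.sqrt_pos.mpr hn0'
    calc c * Real.sqrt ((m + k : ℕ) : ℝ) < Real.exp (-δ / 2) * Real.sqrt ((m + k : ℕ) : ℝ) := by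
          gcongr
      _ ≤ Real.sqrt m := by
          apply Real.le_sqrt_of_sq_le
          rw [mul_pow, Real.sq_sqrt hn0'.le, ← Real.exp_nat_mul, ← Real.exp_log hn0',
            ← Real.exp_add, ← Real.le_log_iff_exp_le hm']
          push_cast at h1 ⊢
          linarith
  · intro c hc
    filter_upwards [Filter.eventually_gt_atTop 0] with n hn
    have hn' : 0 < Real.sqrt n := Real.sqrt_pos.mpr (by exact_mod_cast hn)
    exact lt_of_le_of_lt ((div_le_one hn').mpr (aux_r_le n)) hc
end

section
/- r_5 = 11/5. That is, the maximum of ‖M‖_S over all 5×5 real matrices M with entries of absolute value at most 1 equals 11/5, and it is attained by the circulant matrix with diagonal entries 1 and off-diagonal entries −1. -/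
open scoped ComplexOrder

open Finset in
/-- A weighted factorization of `M` bounds its Schur multiplier norm. -/
theorem copNorm_hadamard_le_of_factor {κ : Type*} [Fintype κ]
    (M : Matrix (Fin 5) (Fin 5) ℝ) (d : κ → ℝ) (X Y : Fin 5 → κ → ℝ) (t : ℝ) (ht : 0 ≤ t)
    (hd : ∀ k, 0 ≤ d k)
    (hM : ∀ i j, M i j = ∑ k, d k * X i k * Y j k)
    (hX : ∀ i, ∑ k, d k * X i k ^ 2 ≤ t) (hY : ∀ j, ∑ k, d k * Y j k ^ 2 ≤ t)
    (C : Matrix (Fin 5) (Fin 5) ℂ) (hC : Matrix.copNorm C ≤ 1) :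
    Matrix.copNorm (Matrix.hadamard (M.map Complex.ofReal) C) ≤ t := by
  unfold Matrix.copNorm
  refine ContinuousLinearMap.opNorm_le_bound _ ht fun v => ?_
  set L := LinearMap.toContinuousLinearMap (Matrix.toEuclideanLin C) with hL
  have hLn : ∀ w, ‖L w‖ ^ 2 ≤ ‖w‖ ^ 2 := by
    intro w
    have h1 : ‖L w‖ ≤ ‖w‖ := by
      calc ‖L w‖ ≤ ‖L‖ * ‖w‖ := L.le_opNorm w
        _ ≤ 1 * ‖w‖ := by gcongr; exact hC
        _ = ‖w‖ := one_mul _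
    gcongr
  let z : κ → EuclideanSpace ℂ (Fin 5) := fun k => WithLp.toLp 2 fun j => (Y j k : ℂ) * v j
  have hLz : ∀ k i, L (z k) i = ∑ j, C i j * ((Y j k : ℂ) * v j) := by
    intro k i
    simp [hL, z, Matrix.toEuclideanLin_apply, Matrix.mulVec, dotProduct]
  have hAv : ∀ i, (LinearMap.toContinuousLinearMap (Matrix.toEuclideanLin
      (Matrix.hadamard (M.map Complex.ofReal) C)) v) i
      = ∑ k, ((d k * X i k : ℝ) : ℂ) * L (z k) i := by
    intro i
    simp only [hLz, Finset.mul_sum]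
    rw [Finset.sum_comm]
    simp only [LinearMap.coe_toContinuousLinearMap', Matrix.toEuclideanLin_apply, Matrix.mulVec,
      dotProduct, Matrix.hadamard_apply, Matrix.map_apply]
    refine Finset.sum_congr rfl fun j _ => ?_
    rw [hM i j]
    push_cast
    rw [Finset.sum_mul, Finset.sum_mul]
    refine Finset.sum_congr rfl fun k _ => ?_
    ring
  have hrow : ∀ i, ‖(LinearMap.toContinuousLinearMap (Matrix.toEuclideanLin
      (Matrix.hadamard (M.map Complex.ofReal) C)) v) i‖ ^ 2
      ≤ t * ∑ k, d k * ‖L (z k) i‖ ^ 2 := by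
    intro i
    rw [hAv i]
    have hnn : 0 ≤ ∑ k, d k * ‖L (z k) i‖ ^ 2 :=
      Finset.sum_nonneg fun k _ => mul_nonneg (hd k) (sq_nonneg _)
    calc ‖∑ k, ((d k * X i k : ℝ) : ℂ) * L (z k) i‖ ^ 2
        ≤ (∑ k, d k * |X i k| * ‖L (z k) i‖) ^ 2 := by
          gcongr
          refine (norm_sum_le _ _).trans (le_of_eq ?_)
          refine Finset.sum_congr rfl fun k _ => ?_
          rw [norm_mul, Complex.norm_real, Real.norm_eq_abs, abs_mul, abs_of_nonneg (hd k)]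
      _ ≤ (∑ k, d k * X i k ^ 2) * ∑ k, d k * ‖L (z k) i‖ ^ 2 := by
          refine Finset.sum_sq_le_sum_mul_sum_of_sq_eq_mul _
            (fun k _ => mul_nonneg (hd k) (sq_nonneg _))
            (fun k _ => mul_nonneg (hd k) (sq_nonneg _)) (fun k _ => ?_)
          rw [← sq_abs (X i k)]
          ring
      _ ≤ t * ∑ k, d k * ‖L (z k) i‖ ^ 2 := by gcongr; exact hX i
  have hsq : ‖LinearMap.toContinuousLinearMap (Matrix.toEuclideanLin
      (Matrix.hadamard (M.map Complex.ofReal) C)) v‖ ^ 2 ≤ (t * ‖v‖) ^ 2 := by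
    rw [EuclideanSpace.norm_sq_eq]
    calc _ ≤ ∑ i, t * ∑ k, d k * ‖L (z k) i‖ ^ 2 := Finset.sum_le_sum fun i _ => hrow i
      _ = t * ∑ k, d k * ‖L (z k)‖ ^ 2 := by
          rw [← Finset.mul_sum, Finset.sum_comm]
          congr 1
          refine Finset.sum_congr rfl fun k _ => ?_
          rw [EuclideanSpace.norm_sq_eq, Finset.mul_sum]
      _ ≤ t * ∑ k, d k * ‖z k‖ ^ 2 := by
          gcongr with k _
          · exact hd k
          · exact le_of_sq_le_sq (hLn (z k)) (norm_nonneg _)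
      _ = t * ∑ j, (∑ k, d k * Y j k ^ 2) * ‖v j‖ ^ 2 := by
          congr 1
          simp only [EuclideanSpace.norm_sq_eq, Finset.mul_sum, Finset.sum_mul]
          rw [Finset.sum_comm]
          refine Finset.sum_congr rfl fun j _ => Finset.sum_congr rfl fun k _ => ?_
          simp only [z, norm_mul, Complex.norm_real, Real.norm_eq_abs, mul_pow, sq_abs]
          ring
      _ ≤ t * ∑ j, t * ‖v j‖ ^ 2 := by
          gcongr with j _
          exact hY j
      _ = (t * ‖v‖) ^ 2 := by
          rw [← Finset.mul_sum, ← EuclideanSpace.norm_sq_eq]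
          ring
  exact le_of_sq_le_sq hsq (by positivity)

/-- Two rows agreeing up to a sign off one column. -/
theorem bound_of_near (M : Matrix (Fin 5) (Fin 5) ℝ) (hM : ∀ i j, M i j = 1 ∨ M i j = -1)
    (i k : Fin 5) (hik : i ≠ k) (σ : ℝ) (hσ : σ = 1 ∨ σ = -1) (j₀ : Fin 5)
    (h : ∀ j, j ≠ j₀ → M k j = σ * M i j)
    (C : Matrix (Fin 5) (Fin 5) ℂ) (hC : Matrix.copNorm C ≤ 1) :
    Matrix.copNorm (Matrix.hadamard (M.map Complex.ofReal) C) ≤ 11 / 5 := by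
  have hsq : ∀ a b, M a b ^ 2 = 1 := fun a b => by rcases hM a b with h | h <;> rw [h] <;> norm_num
  have hσ2 : σ ^ 2 = 1 := by rcases hσ with h | h <;> rw [h] <;> norm_num
  have hcard : ∑ l : Fin 5, (if l = i ∨ l = k then (0 : ℝ) else 1) = 3 := by
    clear h hM hsq
    revert hik
    fin_cases i <;> fin_cases k <;> simp [Fin.sum_univ_succ] <;> try norm_num
  have hodd : ∀ j, M k j ≠ σ * M i j → j = j₀ ∧ M k j = - (σ * M i j) := by
    intro j hj
    refine ⟨by_contra fun hne => hj (h j hne), ?_⟩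
    rcases hσ with h1 | h1 <;> rcases hM k j with h2 | h2 <;> rcases hM i j with h3 | h3 <;>
      rw [h1, h2, h3] at hj ⊢ <;> first | norm_num; done | exact absurd (by norm_num) hj
  let d : Fin 3 ⊕ Fin 5 → ℝ := Sum.elim ![1 / 5, 3 / 2, 1 / 2] fun _ => 2
  let X : Fin 5 → Fin 3 ⊕ Fin 5 → ℝ := fun m => Sum.elim
    ![M m j₀, if m = i then 1 else if m = k then σ else 0,
      if m = i then 1 else if m = k then -σ else 0]
    fun l => if l = m then (if m = i ∨ m = k then 0 else 1) else 0
  let Y : Fin 5 → Fin 3 ⊕ Fin 5 → ℝ := fun j =>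
    if M k j = σ * M i j then Sum.elim ![0, 2 / 3 * M i j, 0]
      fun l => if l = i ∨ l = k then 0 else M l j / 2
    else Sum.elim ![35 / 17, 0, 20 / 17 * M i j]
      fun l => if l = i ∨ l = k then 0 else 5 / 17 * M l j
  refine copNorm_hadamard_le_of_factor M d X Y (11 / 5) (by norm_num) ?_ ?_ ?_ ?_ C hC
  · rintro (a | a)
    · fin_cases a <;> simp [d] <;> norm_num
    · simp [d]
  · intro m j
    have hsum : ∑ l, d (Sum.inr l) * X m (Sum.inr l) * Y j (Sum.inr l)
        = if m = i ∨ m = k then 0 else 2 * Y j (Sum.inr m) := by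
      simp only [d, X, Sum.elim_inr, mul_ite, ite_mul, zero_mul, mul_zero, mul_one,
        Finset.sum_ite_eq', Finset.mem_univ, if_true]
    rw [Fintype.sum_sum_type, hsum]
    by_cases hj : M k j = σ * M i j
    · by_cases hmi : m = i
      · subst hmi
        simp [d, X, Y, hj, Fin.sum_univ_succ (n := 2)]
        ring
      by_cases hmk : m = k
      · subst hmk
        simp [d, X, Y, hj, Fin.sum_univ_succ (n := 2), hmi]
        ring
      simp [d, X, Y, hj, Fin.sum_univ_succ (n := 2), hmi, hmk]
      ring
    · obtain ⟨rfl, hj'⟩ := hodd j hj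
      by_cases hmi : m = i
      · subst hmi
        simp [d, X, Y, hj, Fin.sum_univ_succ (n := 2)]
        ring
      by_cases hmk : m = k
      · subst hmk
        simp [d, X, Y, hj, Fin.sum_univ_succ (n := 2), hmi]
        linear_combination (10 / 17) * hj'
      simp [d, X, Y, hj, Fin.sum_univ_succ (n := 2), hmi, hmk]
      ring
  · intro m
    by_cases hmi : m = i
    · subst hmi
      simp [d, X, Fin.sum_univ_succ (n := 2), hsq]
      norm_num
    by_cases hmk : m = k
    · subst hmk
      simp [d, X, Fin.sum_univ_succ (n := 2), hmi, hsq, hσ2]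
      norm_num
    simp [d, X, Fin.sum_univ_succ (n := 2), hmi, hmk, hsq]
    norm_num
  · intro j
    by_cases hj : M k j = σ * M i j
    · have h1 : ∑ l : Fin 5, 2 * (if l = i ∨ l = k then 0 else M l j / 2) ^ 2 = (3 / 2 : ℝ) := by
        have : ∀ l : Fin 5, 2 * (if l = i ∨ l = k then 0 else M l j / 2) ^ 2
            = (1 / 2 : ℝ) * (if l = i ∨ l = k then (0 : ℝ) else 1) := by
          intro l
          split_ifs
          · simp
          · rw [div_pow, hsq]; norm_num
        simp only [this]
        rw [← Finset.mul_sum, hcard]; norm_num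
      simp only [d, Y, hj, if_true, Fintype.sum_sum_type, Sum.elim_inl, Sum.elim_inr, h1]
      simp [Fin.sum_univ_succ (n := 2), mul_pow, hsq]
      norm_num
    · have h1 : ∑ l : Fin 5, 2 * (if l = i ∨ l = k then 0 else 5 / 17 * M l j) ^ 2
          = (150 / 289 : ℝ) := by
        have : ∀ l : Fin 5, 2 * (if l = i ∨ l = k then 0 else 5 / 17 * M l j) ^ 2
            = (50 / 289 : ℝ) * (if l = i ∨ l = k then (0 : ℝ) else 1) := by
          intro l
          split_ifs
          · simp
          · rw [mul_pow, hsq]; norm_num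
        simp only [this]
        rw [← Finset.mul_sum, hcard]; norm_num
      simp only [d, Y, hj, if_false, Fintype.sum_sum_type, Sum.elim_inl, Sum.elim_inr, h1]
      simp [Fin.sum_univ_succ (n := 2), mul_pow, hsq]
      norm_num

/-- All columns strongly correlated with a sign vector. -/
theorem bound_of_corr (M : Matrix (Fin 5) (Fin 5) ℝ) (hM : ∀ i j, M i j = 1 ∨ M i j = -1)
    (s : Fin 5 → ℝ) (hs : ∀ i, s i = 1 ∨ s i = -1)
    (h : ∀ j, 9 ≤ (∑ l, s l * M l j) ^ 2)
    (C : Matrix (Fin 5) (Fin 5) ℂ) (hC : Matrix.copNorm C ≤ 1) :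
    Matrix.copNorm (Matrix.hadamard (M.map Complex.ofReal) C) ≤ 11 / 5 := by
  have hsq : ∀ a b, M a b ^ 2 = 1 := fun a b => by rcases hM a b with h | h <;> rw [h] <;> norm_num
  have hs2 : ∀ a, s a ^ 2 = 1 := fun a => by rcases hs a with h | h <;> rw [h] <;> norm_num
  let p : Fin 5 → ℝ := fun j => ∑ l, s l * M l j
  let d : Option (Fin 5) → ℝ := fun o => o.elim (1 / 5) fun _ => 2
  let X : Fin 5 → Option (Fin 5) → ℝ := fun m o => o.elim (s m) fun l => if l = m then 1 else 0
  let Y : Fin 5 → Option (Fin 5) → ℝ := fun j o =>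
    o.elim (p j / 3) fun l => M l j / 2 - p j * s l / 30
  refine copNorm_hadamard_le_of_factor M d X Y (11 / 5) (by norm_num) ?_ ?_ ?_ ?_ C hC
  · rintro (_ | a) <;> simp [d]
  · intro m j
    simp [d, X, Y, Fintype.sum_option]
    ring
  · intro m
    simp [d, X, Fintype.sum_option, hs2]
    norm_num
  · intro j
    have h1 : ∑ l, 2 * (M l j / 2 - p j * s l / 30) ^ 2
        = 5 / 2 - p j * p j / 15 + p j ^ 2 / 90 := by
      have : ∀ l, 2 * (M l j / 2 - p j * s l / 30) ^ 2
          = (1 / 2 + p j ^ 2 / 450) - p j / 15 * (s l * M l j) := by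
        intro l
        linear_combination (1 / 2) * hsq l j + p j ^ 2 / 450 * hs2 l
      simp only [this]
      rw [Finset.sum_sub_distrib, ← Finset.mul_sum]
      change _ - p j / 15 * p j = _
      simp
      ring
    have h9 : 9 ≤ p j ^ 2 := h j
    simp only [d, Y, Fintype.sum_option, Option.elim, h1]
    nlinarith

/-- Number of `true` entries. -/
def cnt5 (a b c d e : Bool) : ℕ := a.toNat + b.toNat + c.toNat + d.toNat + e.toNat

/-- Two or three `true` entries. -/
def far5 (a b c d e : Bool) : Bool := cnt5 a b c d e == 2 || cnt5 a b c d e == 3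

/-- Majority. -/
def maj5 (a b c d e : Bool) : Bool := decide (3 ≤ cnt5 a b c d e)

/-- The combinatorial core. -/
theorem comb_core :
    ∀ a0 a1 a2 a3 a4, far5 a0 a1 a2 a3 a4 = true →
    ∀ b0 b1 b2 b3 b4, far5 b0 b1 b2 b3 b4 = true →
      far5 (a0 ^^ b0) (a1 ^^ b1) (a2 ^^ b2) (a3 ^^ b3) (a4 ^^ b4) = true →
    ∀ c0 c1 c2 c3 c4, far5 c0 c1 c2 c3 c4 = true →
      far5 (a0 ^^ c0) (a1 ^^ c1) (a2 ^^ c2) (a3 ^^ c3) (a4 ^^ c4) = true →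
      far5 (b0 ^^ c0) (b1 ^^ c1) (b2 ^^ c2) (b3 ^^ c3) (b4 ^^ c4) = true →
    ∀ d0 d1 d2 d3 d4, far5 d0 d1 d2 d3 d4 = true →
      far5 (a0 ^^ d0) (a1 ^^ d1) (a2 ^^ d2) (a3 ^^ d3) (a4 ^^ d4) = true →
      far5 (b0 ^^ d0) (b1 ^^ d1) (b2 ^^ d2) (b3 ^^ d3) (b4 ^^ d4) = true →
      far5 (c0 ^^ d0) (c1 ^^ d1) (c2 ^^ d2) (c3 ^^ d3) (c4 ^^ d4) = true →
    let A := maj5 a0 a1 a2 a3 a4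
    let B := maj5 b0 b1 b2 b3 b4
    let Γ := maj5 c0 c1 c2 c3 c4
    let Δ := maj5 d0 d1 d2 d3 d4
    far5 false (A ^^ a0) (B ^^ b0) (Γ ^^ c0) (Δ ^^ d0) = false ∧
    far5 false (A ^^ a1) (B ^^ b1) (Γ ^^ c1) (Δ ^^ d1) = false ∧
    far5 false (A ^^ a2) (B ^^ b2) (Γ ^^ c2) (Δ ^^ d2) = false ∧
    far5 false (A ^^ a3) (B ^^ b3) (Γ ^^ c3) (Δ ^^ d3) = false ∧
    far5 false (A ^^ a4) (B ^^ b4) (Γ ^^ c4) (Δ ^^ d4) = false := by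
  decide +kernel

theorem near_of_not_far : ∀ a0 a1 a2 a3 a4, far5 a0 a1 a2 a3 a4 = false →
    ∃ σ : Bool, ∃ j₀ : Fin 5, ∀ j, j ≠ j₀ → ![a0, a1, a2, a3, a4] j = σ := by
  decide +kernel

/-- The real sign of a Boolean. -/
def sgn (b : Bool) : ℝ := if b then -1 else 1

theorem sgn_xor (a b : Bool) : sgn (a ^^ b) = sgn a * sgn b := by
  cases a <;> cases b <;> simp [sgn]

theorem sgn_or (a : Bool) : sgn a = 1 ∨ sgn a = -1 := by
  cases a <;> simp [sgn]

theorem sgn_mul_self (a : Bool) : sgn a * sgn a = 1 := by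
  cases a <;> simp [sgn]

theorem nine_le_of_not_far : ∀ a b c d e, far5 a b c d e = false →
    9 ≤ (sgn a + sgn b + sgn c + sgn d + sgn e) ^ 2 := by
  intro a b c d e h
  cases a <;> cases b <;> cases c <;> cases d <;> cases e <;>
    first
    | (exfalso; revert h; decide)
    | (simp [sgn]; norm_num)

theorem bound_of_bool (b : Fin 5 → Fin 5 → Bool)
    (C : Matrix (Fin 5) (Fin 5) ℂ) (hC : Matrix.copNorm C ≤ 1) :
    Matrix.copNorm (Matrix.hadamard
      ((Matrix.of fun i j => sgn (b i j) : Matrix (Fin 5) (Fin 5) ℝ).map Complex.ofReal) C)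
      ≤ 11 / 5 := by
  have hM : ∀ i j, (Matrix.of fun i j => sgn (b i j) : Matrix (Fin 5) (Fin 5) ℝ) i j = 1 ∨
      (Matrix.of fun i j => sgn (b i j) : Matrix (Fin 5) (Fin 5) ℝ) i j = -1 :=
    fun i j => sgn_or _
  by_cases hnear : ∃ i k : Fin 5, i ≠ k ∧ far5 (b i 0 ^^ b k 0) (b i 1 ^^ b k 1) (b i 2 ^^ b k 2)
      (b i 3 ^^ b k 3) (b i 4 ^^ b k 4) = false
  · obtain ⟨i, k, hik, hf⟩ := hnear
    obtain ⟨σ, j₀, hj⟩ := near_of_not_far _ _ _ _ _ hf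
    refine bound_of_near _ hM i k hik (sgn σ) (sgn_or σ) j₀ (fun j hne => ?_) C hC
    have h1 : (b i j ^^ b k j) = σ := by
      rw [← hj j hne]
      fin_cases j <;> rfl
    simp only [Matrix.of_apply]
    rw [← h1, sgn_xor, mul_right_comm, sgn_mul_self, one_mul]
  · have hfar : ∀ i k : Fin 5, i ≠ k → far5 (b i 0 ^^ b k 0) (b i 1 ^^ b k 1) (b i 2 ^^ b k 2)
        (b i 3 ^^ b k 3) (b i 4 ^^ b k 4) = true := by
      intro i k hik
      by_contra hc
      exact hnear ⟨i, k, hik, by simpa using hc⟩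
    have hx : ∀ x y z : Bool, ((x ^^ y) ^^ (x ^^ z)) = (y ^^ z) := by decide
    have key := comb_core _ _ _ _ _ (hfar 0 1 (by decide)) _ _ _ _ _ (hfar 0 2 (by decide))
      (by simp only [hx]; exact hfar 1 2 (by decide))
      _ _ _ _ _ (hfar 0 3 (by decide))
      (by simp only [hx]; exact hfar 1 3 (by decide))
      (by simp only [hx]; exact hfar 2 3 (by decide))
      _ _ _ _ _ (hfar 0 4 (by decide))
      (by simp only [hx]; exact hfar 1 4 (by decide))
      (by simp only [hx]; exact hfar 2 4 (by decide))
      (by simp only [hx]; exact hfar 3 4 (by decide))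
    let S : Fin 5 → Bool := fun i => if i = 0 then false else
      maj5 (b 0 0 ^^ b i 0) (b 0 1 ^^ b i 1) (b 0 2 ^^ b i 2) (b 0 3 ^^ b i 3) (b 0 4 ^^ b i 4)
    refine bound_of_corr _ hM (fun i => sgn (S i)) (fun i => sgn_or _) (fun j => ?_) C hC
    have hcol : far5 false (S 1 ^^ (b 0 j ^^ b 1 j)) (S 2 ^^ (b 0 j ^^ b 2 j))
        (S 3 ^^ (b 0 j ^^ b 3 j)) (S 4 ^^ (b 0 j ^^ b 4 j)) = false := by
      obtain ⟨k0, k1, k2, k3, k4⟩ := key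
      fin_cases j
      exacts [k0, k1, k2, k3, k4]
    have h9 := nine_le_of_not_far _ _ _ _ _ hcol
    have h0 : S 0 = false := rfl
    have e : (∑ l, sgn (S l) * (Matrix.of fun i j => sgn (b i j) : Matrix (Fin 5) (Fin 5) ℝ) l j)
        = sgn (b 0 j) * (sgn false + sgn (S 1 ^^ (b 0 j ^^ b 1 j)) + sgn (S 2 ^^ (b 0 j ^^ b 2 j))
          + sgn (S 3 ^^ (b 0 j ^^ b 3 j)) + sgn (S 4 ^^ (b 0 j ^^ b 4 j))) := by
      have hq := sgn_mul_self (b 0 j)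
      simp only [Fin.sum_univ_five, sgn_xor, Matrix.of_apply, h0]
      linear_combination (-(sgn (S 1) * sgn (b 1 j)) - (sgn (S 2) * sgn (b 2 j))
        - (sgn (S 3) * sgn (b 3 j)) - (sgn (S 4) * sgn (b 4 j))) * hq
    rw [e, mul_pow, pow_two (sgn (b 0 j)), sgn_mul_self, one_mul]
    exact h9

/-- The bound holds for every real matrix with entries in `[-1, 1]`. -/
theorem bound_all (M : Matrix (Fin 5) (Fin 5) ℝ) (hM : ∀ i j, |M i j| ≤ 1)
    (C : Matrix (Fin 5) (Fin 5) ℂ) (hC : Matrix.copNorm C ≤ 1) :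
    Matrix.copNorm (Matrix.hadamard (M.map Complex.ofReal) C) ≤ 11 / 5 := by
  let Good : Set (Fin 5 → Fin 5 → ℝ) :=
    {N | Matrix.copNorm (Matrix.hadamard ((Matrix.of N).map Complex.ofReal) C) ≤ 11 / 5}
  have hconv : Convex ℝ Good := by
    intro x hx y hy a c ha hc hac
    have e : Matrix.hadamard ((Matrix.of (a • x + c • y)).map Complex.ofReal) C
        = (a : ℂ) • Matrix.hadamard ((Matrix.of x).map Complex.ofReal) C
          + (c : ℂ) • Matrix.hadamard ((Matrix.of y).map Complex.ofReal) C := by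
      ext i j
      simp [Matrix.hadamard_apply]
      ring
    have hx' : Matrix.copNorm (Matrix.hadamard ((Matrix.of x).map Complex.ofReal) C) ≤ 11 / 5 := hx
    have hy' : Matrix.copNorm (Matrix.hadamard ((Matrix.of y).map Complex.ofReal) C) ≤ 11 / 5 := hy
    change Matrix.copNorm _ ≤ _
    rw [e]
    unfold Matrix.copNorm at hx' hy' ⊢
    rw [map_add, map_add, map_smul, map_smul, map_smul, map_smul]
    refine (norm_add_le _ _).trans ?_
    rw [norm_smul, norm_smul, Complex.norm_real, Complex.norm_real, Real.norm_eq_abs,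
      Real.norm_eq_abs, abs_of_nonneg ha, abs_of_nonneg hc]
    nlinarith [mul_le_mul_of_nonneg_left hx' ha, mul_le_mul_of_nonneg_left hy' hc]
  let T : Set (Fin 5 → Fin 5 → ℝ) :=
    Set.univ.pi fun _ => Set.univ.pi fun _ => ({-1, 1} : Set ℝ)
  have hT : T ⊆ Good := by
    intro N hN
    have hN' : ∀ i j, N i j = -1 ∨ N i j = 1 := fun i j => by
      simpa using hN i (Set.mem_univ i) j (Set.mem_univ j)
    have e : (Matrix.of N) = Matrix.of fun i j => sgn (decide (N i j = -1)) := by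
      ext i j
      rcases hN' i j with h | h <;> simp [sgn, h] <;> try norm_num
    change Matrix.copNorm _ ≤ _
    rw [e]
    exact bound_of_bool _ C hC
  have hmem : (fun i j => M i j) ∈ convexHull ℝ T := by
    simp only [T, convexHull_pi]
    intro i _ j _
    rw [convexHull_pair, segment_eq_Icc (by norm_num)]
    exact abs_le.mp (hM i j)
  exact convexHull_min hT hconv hmem

theorem schurNorm_le_all (M : Matrix (Fin 5) (Fin 5) ℝ) (hM : ∀ i j, |M i j| ≤ 1) :
    Matrix.schurNorm (M.map Complex.ofReal) ≤ 11 / 5 := by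
  refine csSup_le ⟨_, 0, ?_, rfl⟩ ?_
  · simp [Matrix.copNorm]
  · rintro x ⟨C, hC, rfl⟩
    exact bound_all M hM C hC

theorem schurNorm_extremal :
    Matrix.schurNorm ((Matrix.of fun i j : Fin 5 =>
        if i = j then (1 : ℝ) else -1).map Complex.ofReal) = 11 / 5 := by
  have hent : ∀ i j : Fin 5, |(Matrix.of fun i j : Fin 5 => if i = j then (1 : ℝ) else -1) i j| ≤ 1
      := by
    intro i j
    simp only [Matrix.of_apply]
    split_ifs <;> simp
  refine le_antisymm (schurNorm_le_all _ hent) ?_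
  let C : Matrix (Fin 5) (Fin 5) ℂ := Matrix.of fun i j => if i = j then 3 / 5 else -2 / 5
  have hC : Matrix.copNorm C ≤ 1 := by
    refine ContinuousLinearMap.opNorm_le_bound _ zero_le_one fun v => ?_
    rw [one_mul]
    refine le_of_sq_le_sq (le_of_eq ?_) (norm_nonneg _)
    simp only [EuclideanSpace.norm_sq_eq, LinearMap.coe_toContinuousLinearMap',
      Matrix.toEuclideanLin_apply, Matrix.mulVec, dotProduct, C, Fin.sum_univ_five,
      Complex.sq_norm, Complex.normSq_apply, Matrix.of_apply]
    simp
    ring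
  refine le_trans ?_ (le_csSup ?_ ⟨C, hC, rfl⟩)
  · let v : EuclideanSpace ℂ (Fin 5) := WithLp.toLp 2 fun _ => 1
    have hv : v ≠ 0 := by
      intro h
      have := congrArg (fun w : EuclideanSpace ℂ (Fin 5) => w 0) h
      simp [v] at this
    have hA : LinearMap.toContinuousLinearMap (Matrix.toEuclideanLin (Matrix.hadamard
        ((Matrix.of fun i j : Fin 5 => if i = j then (1 : ℝ) else -1).map Complex.ofReal) C)) v
        = ((11 / 5 : ℝ) : ℂ) • v := by
      ext i
      simp only [LinearMap.coe_toContinuousLinearMap',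
        Matrix.toEuclideanLin_apply, Matrix.mulVec, dotProduct, C, Fin.sum_univ_five, v,
        Matrix.hadamard_apply, Matrix.map_apply, Matrix.of_apply]
      fin_cases i <;> simp <;> norm_num
    have hle := ContinuousLinearMap.le_opNorm (LinearMap.toContinuousLinearMap
      (Matrix.toEuclideanLin (Matrix.hadamard
        ((Matrix.of fun i j : Fin 5 => if i = j then (1 : ℝ) else -1).map Complex.ofReal) C))) v
    rw [hA, norm_smul, Complex.norm_real, Real.norm_eq_abs, abs_of_pos (by norm_num)] at hle
    exact le_of_mul_le_mul_right hle (norm_pos_iff.mpr hv)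
  · refine ⟨11 / 5, ?_⟩
    rintro x ⟨C', hC', rfl⟩
    exact bound_all _ hent C' hC'

/-- `r 5 = 11 / 5`, and the maximum is attained by the circulant matrix with diagonal
entries `1` and off-diagonal entries `-1`. -/
theorem rSchur_five :
    rSchur 5 = 11 / 5 ∧
      Matrix.schurNorm ((Matrix.of fun i j : Fin 5 =>
        if i = j then (1 : ℝ) else -1).map Complex.ofReal) = 11 / 5 := by
  refine ⟨le_antisymm ?_ ?_, schurNorm_extremal⟩
  · refine csSup_le ⟨_, 0, by simp, rfl⟩ ?_
    rintro x ⟨M, hM, rfl⟩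
    exact schurNorm_le_all M hM
  · refine le_csSup ⟨11 / 5, ?_⟩ ⟨_, ?_, schurNorm_extremal.symm⟩
    · rintro x ⟨M, hM, rfl⟩
      exact schurNorm_le_all M hM
    · intro i j
      simp only [Matrix.of_apply]
      split_ifs <;> simp
end

section
/- r_6 = (4 + √10)/3. That is, the maximum of ‖M‖_S over all 6×6 real matrices M with entries of absolute value at most 1 equals (4 + √10)/3. -/
open scoped ComplexOrder

/-! ### The finite search -/

/-- `okWord z`: the 6-bit word `z` has weight 2, 3 or 4 (looked up in a bit mask). -/
def okWord (z : ℕ) : Bool := Nat.beq (Nat.land (Nat.shiftRight 1693212715960434408 z) 1) 1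

/-- On the rows in the mask `D`, the words `A` and `B` agree, or disagree, throughout. -/
def constOn (D A B : ℕ) : Bool :=
  Nat.beq (Nat.land (Nat.xor A B) D) 0 || Nat.beq (Nat.land (Nat.xor A B) D) D

/-- Quick filter: words of weight exactly 2. -/
def twoWord (z : ℕ) : Bool := Nat.beq (Nat.land (Nat.shiftRight 282668995843688 z) 1) 1

/-- First criterion, for the pair of words `A`, `D`, with the mask `m` (0 or 63) as a sign:
the rows where they differ are exactly two, and two of the other words are constant there. -/
def crit1 (m A D X Y Z U : ℕ) : Bool :=
  twoWord (Nat.xor (Nat.xor A D) m) &&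
   ((constOn (Nat.xor (Nat.xor A D) m) A X && (constOn (Nat.xor (Nat.xor A D) m) A Y ||
      constOn (Nat.xor (Nat.xor A D) m) A Z || constOn (Nat.xor (Nat.xor A D) m) A U)) ||
    (constOn (Nat.xor (Nat.xor A D) m) A Y && (constOn (Nat.xor (Nat.xor A D) m) A Z ||
      constOn (Nat.xor (Nat.xor A D) m) A U)) ||
    (constOn (Nat.xor (Nat.xor A D) m) A Z && constOn (Nat.xor (Nat.xor A D) m) A U))

def pair1 (A D X Y Z U : ℕ) : Bool := crit1 0 A D X Y Z U || crit1 63 A D X Y Z U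

def test1 (a b c d e f : ℕ) : Bool :=
  pair1 a b c d e f || pair1 a c b d e f || pair1 a d b c e f || pair1 a e b c d f ||
  pair1 a f b c d e || pair1 b c a d e f || pair1 b d a c e f || pair1 b e a c d f ||
  pair1 b f a c d e || pair1 c d a b e f || pair1 c e a b d f || pair1 c f a b d e ||
  pair1 d e a b c f || pair1 d f a b c e || pair1 e f a b c d

/-- Rows on which the three words (with signs) are not all equal. -/
def ncst (m m' A B C : ℕ) : ℕ :=
  Nat.lor (Nat.xor (Nat.xor A B) m) (Nat.xor (Nat.xor A C) m')

/-- Third and fourth criterion, for a splitting of the columns in two triples. -/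
def crit34 (A B C D E F m1 m2 m3 m4 : ℕ) : Bool :=
  (Nat.beq (ncst m1 m2 A B C) 63 && Nat.beq (ncst m3 m4 D E F) 63) ||
  Nat.beq (Nat.land (ncst m1 m2 A B C) (ncst m3 m4 D E F)) 0

def split34 (A B C D E F : ℕ) : Bool :=
  [0, 63].any fun m1 => [0, 63].any fun m2 => [0, 63].any fun m3 => [0, 63].any fun m4 =>
    crit34 A B C D E F m1 m2 m3 m4

def test34 (a b c d e f : ℕ) : Bool :=
  split34 a b c d e f || split34 a b d c e f || split34 a b e c d f || split34 a b f c d e ||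
  split34 a c d b e f || split34 a c e b d f || split34 a c f b d e || split34 a d e b c f ||
  split34 a d f b c e || split34 a e f b c d

/-- Row `i`, with signs `s`, has at most one minus or at most one plus. -/
def rowWord (a b c d e f s i : ℕ) : Bool :=
  !okWord (Nat.xor s ((Nat.testBit a i).toNat + 2 * (Nat.testBit b i).toNat
    + 4 * (Nat.testBit c i).toNat + 8 * (Nat.testBit d i).toNat
    + 16 * (Nat.testBit e i).toNat + 32 * (Nat.testBit f i).toNat))

def test2 (a b c d e f : ℕ) : Bool :=
  (List.range 64).any fun s => (List.range 6).all fun i => rowWord a b c d e f s i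

def test (a b c d e f : ℕ) : Bool :=
  test1 a b c d e f || test34 a b c d e f || test2 a b c d e f

def leaf : List ℕ → Bool
  | [f, e, d, c, b, a] => test a b c d e f
  | _ => true

/-- Backtracking search over increasing sequences of pairwise compatible columns. -/
def search : ℕ → List ℕ → List ℕ → Bool
  | 0, ch, _ => leaf ch
  | n + 1, ch, cand => cand.all fun x =>
      search n (x :: ch) (cand.filter fun y => Nat.blt x y && okWord (Nat.xor x y))

/-- Even 6-bit words of weight 2, 3 or 4. -/
def startList : List ℕ :=
  [6, 10, 12, 14, 18, 20, 22, 24, 26, 28, 30, 34, 36, 38, 40, 42, 44, 46, 48, 50, 52, 54, 56, 58, 60]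
/-! ### Factorizations bound the Schur norm -/

/-- A real matrix with a factorization witnessing Schur norm at most `(4 + √10) / 3`. -/
def GoodM (M : Fin 6 → Fin 6 → ℝ) : Prop :=
  ∃ (D : Fin 8 → ℝ) (y l : Fin 6 → Fin 8 → ℝ), (∀ k, 0 < D k) ∧
    (∀ i, ∑ k, y i k ^ 2 / D k ≤ (4 + Real.sqrt 10) / 3) ∧
    (∀ j, ∑ k, D k * l j k ^ 2 ≤ (4 + Real.sqrt 10) / 3) ∧
    ∀ i j, M i j = ∑ k, y i k * l j k

theorem copNorm_nonneg' {m n : Type*} [Fintype m] [Fintype n] [DecidableEq n]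
    (M : Matrix m n ℂ) : 0 ≤ Matrix.copNorm M := norm_nonneg _

theorem copNorm_mulVec_le (C : Matrix (Fin 6) (Fin 6) ℂ) (hC : Matrix.copNorm C ≤ 1)
    (v : EuclideanSpace ℂ (Fin 6)) : ‖Matrix.toEuclideanLin C v‖ ≤ ‖v‖ := by
  have h := (LinearMap.toContinuousLinearMap (Matrix.toEuclideanLin C)).le_opNorm v
  calc _ ≤ _ := h
    _ ≤ 1 * ‖v‖ := by
      apply mul_le_mul_of_nonneg_right hC (norm_nonneg _)
    _ = ‖v‖ := one_mul _

/-- Componentwise real scaling of a vector. -/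
noncomputable def scl (a : Fin 6 → ℝ) (v : EuclideanSpace ℂ (Fin 6)) :
    EuclideanSpace ℂ (Fin 6) := WithLp.toLp 2 (fun i => (a i : ℂ) * v i)

theorem sum_scl (c : ℝ) (a : Fin 6 → Fin 8 → ℝ) (ha : ∀ i, ∑ k, a i k ^ 2 ≤ c)
    (v : EuclideanSpace ℂ (Fin 6)) :
    ∑ k, ‖scl (fun i => a i k) v‖ ^ 2 ≤ c * ‖v‖ ^ 2 := by
  have h1 : ∀ k, ‖scl (fun i => a i k) v‖ ^ 2 = ∑ i, a i k ^ 2 * ‖v i‖ ^ 2 := by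
    intro k
    rw [EuclideanSpace.norm_sq_eq]
    refine Finset.sum_congr rfl fun i _ => ?_
    simp [scl, mul_pow]
  simp_rw [h1]
  rw [Finset.sum_comm, EuclideanSpace.norm_sq_eq, Finset.mul_sum]
  refine Finset.sum_le_sum fun i _ => ?_
  rw [← Finset.sum_mul]
  exact mul_le_mul_of_nonneg_right (ha i) (by positivity)

theorem copNorm_hadamard_le (c : ℝ) (hc : 0 ≤ c) (M : Fin 6 → Fin 6 → ℝ)
    (a b : Fin 6 → Fin 8 → ℝ) (ha : ∀ i, ∑ k, a i k ^ 2 ≤ c) (hb : ∀ i, ∑ k, b i k ^ 2 ≤ c)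
    (hM : ∀ i j, M i j = ∑ k, a i k * b j k)
    (C : Matrix (Fin 6) (Fin 6) ℂ) (hC : Matrix.copNorm C ≤ 1) :
    Matrix.copNorm (Matrix.hadamard (Matrix.map (Matrix.of M) Complex.ofReal) C) ≤ c := by
  refine ContinuousLinearMap.opNorm_le_bound _ hc fun v => ?_
  set T := Matrix.toEuclideanLin (Matrix.hadamard (Matrix.map (Matrix.of M) Complex.ofReal) C)
    with hT
  change ‖T v‖ ≤ c * ‖v‖
  have key : ∀ u : EuclideanSpace ℂ (Fin 6), ‖inner ℂ u (T v)‖ ≤ c * ‖u‖ * ‖v‖ := by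
    intro u
    have h1 : inner ℂ u (T v) = ∑ k, inner ℂ (scl (fun i => a i k) u)
        (Matrix.toEuclideanLin C (scl (fun i => b i k) v)) := by
      simp only [PiLp.inner_apply, hT, scl, Matrix.toLpLin_apply, Matrix.mulVec,
        dotProduct, Matrix.hadamard_apply, Matrix.map_apply, Matrix.of_apply, hM,
        RCLike.inner_apply, map_mul, Complex.conj_ofReal, Complex.ofReal_sum, Complex.ofReal_mul,
        Finset.sum_mul]
      conv_rhs => rw [Finset.sum_comm]
      refine Finset.sum_congr rfl fun x _ => ?_
      rw [Finset.sum_comm]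
      refine Finset.sum_congr rfl fun k _ => Finset.sum_congr rfl fun j _ => ?_
      ring
    rw [h1]
    calc _ ≤ ∑ k, ‖scl (fun i => a i k) u‖ * ‖scl (fun i => b i k) v‖ := by
          refine (norm_sum_le _ _).trans (Finset.sum_le_sum fun k _ => ?_)
          refine (norm_inner_le_norm _ _).trans ?_
          exact mul_le_mul_of_nonneg_left (copNorm_mulVec_le C hC _) (norm_nonneg _)
      _ ≤ √(∑ k, ‖scl (fun i => a i k) u‖ ^ 2) * √(∑ k, ‖scl (fun i => b i k) v‖ ^ 2) :=
          Real.sum_mul_le_sqrt_mul_sqrt _ _ _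
      _ ≤ √(c * ‖u‖ ^ 2) * √(c * ‖v‖ ^ 2) := by
          gcongr
          · exact sum_scl c a ha u
          · exact sum_scl c b hb v
      _ = c * ‖u‖ * ‖v‖ := by
          rw [← Real.sqrt_mul (by positivity)]
          rw [show c * ‖u‖ ^ 2 * (c * ‖v‖ ^ 2) = (c * ‖u‖ * ‖v‖) ^ 2 by ring]
          exact Real.sqrt_sq (by positivity)
  have h2 := key (T v)
  rw [inner_self_eq_norm_sq_to_K] at h2
  have h3 : ‖T v‖ ^ 2 ≤ c * ‖T v‖ * ‖v‖ := by simpa using h2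
  rcases (norm_nonneg (T v)).eq_or_lt with h0 | h0
  · rw [← h0]; positivity
  · nlinarith

theorem GoodM.le {M : Fin 6 → Fin 6 → ℝ} (h : GoodM M)
    (C : Matrix (Fin 6) (Fin 6) ℂ) (hC : Matrix.copNorm C ≤ 1) :
    Matrix.copNorm (Matrix.hadamard (Matrix.map (Matrix.of M) Complex.ofReal) C)
      ≤ (4 + Real.sqrt 10) / 3 := by
  obtain ⟨D, y, l, hD, hy, hl, hM⟩ := h
  refine copNorm_hadamard_le _ (by positivity) M (fun i k => y i k / √(D k))
    (fun j k => √(D k) * l j k) ?_ ?_ ?_ C hC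
  · intro i
    simpa [div_pow, Real.sq_sqrt (hD _).le] using hy i
  · intro j
    simpa [mul_pow, Real.sq_sqrt (hD _).le] using hl j
  · intro i j
    rw [hM]
    refine Finset.sum_congr rfl fun k _ => ?_
    have : √(D k) ≠ 0 := (Real.sqrt_pos.2 (hD k)).ne'
    field_simp

/-! ### Signs -/

/-- The sign of a Boolean. -/
def sg (b : Bool) : ℝ := if b then -1 else 1

theorem sg_xor (a b : Bool) : sg (a ^^ b) = sg a * sg b := by
  cases a <;> cases b <;> simp [sg]

theorem sg_sq (a : Bool) : sg a * sg a = 1 := by cases a <;> simp [sg]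

/-- A sign matrix with a good factorization. -/
def GoodB (B : Fin 6 → Fin 6 → Bool) : Prop := GoodM fun i j => sg (B i j)

theorem GoodB.of_col (B : Fin 6 → Fin 6 → Bool) (p : Fin 6 → Fin 6) (hp : Function.Injective p)
    (f : Fin 6 → Bool) (h : GoodB fun i j => (B i (p j) ^^ f j)) : GoodB B := by
  obtain ⟨D, y, l, hD, hy, hl, hM⟩ := h
  let e : Fin 6 ≃ Fin 6 := Equiv.ofBijective p (Finite.injective_iff_bijective.1 hp)
  have he : ∀ j, p (e.symm j) = j := fun j => e.apply_symm_apply j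
  refine ⟨D, y, fun j k => sg (f (e.symm j)) * l (e.symm j) k, hD, hy, ?_, ?_⟩
  · intro j
    have : ∀ k, (sg (f (e.symm j)) * l (e.symm j) k) ^ 2 = l (e.symm j) k ^ 2 := by
      intro k; rw [mul_pow, pow_two, sg_sq, one_mul]
    simpa only [this] using hl (e.symm j)
  · intro i j
    have h1 := hM i (e.symm j)
    simp only [sg_xor, he] at h1
    have h2 : sg (B i j) = sg (f (e.symm j)) * (sg (B i j) * sg (f (e.symm j))) := by
      rw [mul_comm, mul_assoc, sg_sq, mul_one]
    change sg (B i j) = _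
    rw [h2, h1, Finset.mul_sum]
    refine Finset.sum_congr rfl fun k _ => ?_
    ring

theorem GoodB.of_row (B : Fin 6 → Fin 6 → Bool) 
    (f : Fin 6 → Bool) (h : GoodB fun i j => (B i j ^^ f i)) : GoodB B := by
  obtain ⟨D, y, l, hD, hy, hl, hM⟩ := h
  refine ⟨D, fun i k => sg (f i) * y i k, l, hD, ?_, hl, ?_⟩
  · intro j
    have : ∀ k, (sg (f j) * y j k) ^ 2 = y j k ^ 2 := by
      intro k; rw [mul_pow, pow_two, sg_sq, one_mul]
    simpa only [this] using hy j
  · intro i j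
    have h1 := hM i j
    simp only [sg_xor] at h1
    have h2 : sg (B i j) = sg (f i) * (sg (B i j) * sg (f i)) := by
      rw [mul_comm, mul_assoc, sg_sq, mul_one]
    change sg (B i j) = _
    rw [h2, h1, Finset.mul_sum]
    refine Finset.sum_congr rfl fun k _ => ?_
    ring

/-! ### Four families of factorizations -/

theorem bound_ge : (2387 / 1000 : ℝ) ≤ (4 + Real.sqrt 10) / 3 := by
  have : (3.162 : ℝ) ≤ Real.sqrt 10 := Real.le_sqrt_of_sq_le (by norm_num)
  linarith

theorem base1 (B : Fin 6 → Fin 6 → Bool)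
    (h : ∀ i, B i 0 = B i 3 ∨ (B i 0 = B i 1 ∧ B i 0 = B i 2)) : GoodB B := by
  refine ⟨![1.58, 1.27, 0.7, 1.115, 2.38, 2.38, 1, 1],
    fun i => ![(sg (B i 0) + sg (B i 3)) / 2, (sg (B i 1) + sg (B i 2)) / 2,
      (sg (B i 0) - sg (B i 3)) / 2 - 0.28 * ((sg (B i 1) + sg (B i 2)) / 2),
      (sg (B i 1) - sg (B i 2)) / 2, sg (B i 4), sg (B i 5), 0, 0],
    ![![1, 0.28, 1, 0, 0, 0, 0, 0], ![0, 1, 0, 1, 0, 0, 0, 0], ![0, 1, 0, -1, 0, 0, 0, 0],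
      ![1, -0.28, -1, 0, 0, 0, 0, 0], ![0, 0, 0, 0, 1, 0, 0, 0], ![0, 0, 0, 0, 0, 1, 0, 0]],
    ?_, ?_, ?_, ?_⟩
  · intro k; fin_cases k <;> simp <;> norm_num
  · intro i
    refine le_trans ?_ bound_ge
    have h := h i
    simp only [Fin.sum_univ_eight]
    revert h
    generalize B i 0 = x0
    generalize B i 1 = x1
    generalize B i 2 = x2
    generalize B i 3 = x3
    generalize B i 4 = x4
    generalize B i 5 = x5
    intro h
    have e4 : sg x4 ^ 2 = 1 := by rw [pow_two, sg_sq]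
    have e5 : sg x5 ^ 2 = 1 := by rw [pow_two, sg_sq]
    cases x0 <;> cases x1 <;> cases x2 <;> cases x3 <;> simp at h <;>
      simp [e4, e5] <;> norm_num [sg]
  · intro j
    refine le_trans ?_ bound_ge
    fin_cases j <;> simp [Fin.sum_univ_eight] <;> norm_num
  · intro i j
    fin_cases j <;> simp [Fin.sum_univ_eight] <;> ring

theorem base2 (B : Fin 6 → Fin 6 → Bool)
    (h : ∀ i, okWord ((B i 0).toNat + 2 * (B i 1).toNat + 4 * (B i 2).toNat + 8 * (B i 3).toNat
      + 16 * (B i 4).toNat + 32 * (B i 5).toNat) = false) : GoodB B := by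
  refine ⟨![2, 2, 2, 2, 2, 2, 1 / 3, 1],
    fun i =>
      let t := (sg (B i 0) + sg (B i 1) + sg (B i 2) + sg (B i 3) + sg (B i 4) + sg (B i 5)) / 12
      ![sg (B i 0) - t, sg (B i 1) - t, sg (B i 2) - t, sg (B i 3) - t, sg (B i 4) - t,
        sg (B i 5) - t, t, 0],
    ![![1, 0, 0, 0, 0, 0, 1, 0], ![0, 1, 0, 0, 0, 0, 1, 0], ![0, 0, 1, 0, 0, 0, 1, 0],
      ![0, 0, 0, 1, 0, 0, 1, 0], ![0, 0, 0, 0, 1, 0, 1, 0], ![0, 0, 0, 0, 0, 1, 1, 0]],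
    ?_, ?_, ?_, ?_⟩
  · intro k; fin_cases k <;> simp
  · intro i
    refine le_trans ?_ bound_ge
    have h := h i
    simp only [Fin.sum_univ_eight]
    revert h
    generalize B i 0 = x0
    generalize B i 1 = x1
    generalize B i 2 = x2
    generalize B i 3 = x3
    generalize B i 4 = x4
    generalize B i 5 = x5
    intro h
    cases x0 <;> cases x1 <;> cases x2 <;> cases x3 <;> cases x4 <;> cases x5 <;>
      first
      | (exfalso; revert h; decide)
      | (simp; norm_num [sg])
  · intro j
    refine le_trans ?_ bound_ge
    fin_cases j <;> simp [Fin.sum_univ_eight] <;> norm_num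
  · intro i j
    fin_cases j <;> simp [Fin.sum_univ_eight]

theorem base3 (B : Fin 6 → Fin 6 → Bool)
    (h : ∀ i, ¬ (B i 0 = B i 1 ∧ B i 0 = B i 2) ∧ ¬ (B i 3 = B i 4 ∧ B i 3 = B i 5)) :
    GoodB B := by
  refine ⟨![0.945, 0.945, 0.945, 0.475, 0.945, 0.945, 0.945, 0.475],
    fun i =>
      ![(sg (B i 0) - sg (B i 1)) / 3, (sg (B i 1) - sg (B i 2)) / 3, (sg (B i 0) - sg (B i 2)) / 3,
        (sg (B i 0) + sg (B i 1) + sg (B i 2)) / 3,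
        (sg (B i 3) - sg (B i 4)) / 3, (sg (B i 4) - sg (B i 5)) / 3, (sg (B i 3) - sg (B i 5)) / 3,
        (sg (B i 3) + sg (B i 4) + sg (B i 5)) / 3],
    ![![1, 0, 1, 1, 0, 0, 0, 0], ![-1, 1, 0, 1, 0, 0, 0, 0], ![0, -1, -1, 1, 0, 0, 0, 0],
      ![0, 0, 0, 0, 1, 0, 1, 1], ![0, 0, 0, 0, -1, 1, 0, 1], ![0, 0, 0, 0, 0, -1, -1, 1]],
    ?_, ?_, ?_, ?_⟩
  · intro k; fin_cases k <;> simp <;> norm_num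
  · intro i
    refine le_trans ?_ bound_ge
    have h := h i
    simp only [Fin.sum_univ_eight]
    revert h
    generalize B i 0 = x0
    generalize B i 1 = x1
    generalize B i 2 = x2
    generalize B i 3 = x3
    generalize B i 4 = x4
    generalize B i 5 = x5
    intro h
    cases x0 <;> cases x1 <;> cases x2 <;> cases x3 <;> cases x4 <;> cases x5 <;>
      first
      | (exfalso; revert h; decide)
      | (simp; norm_num [sg])
  · intro j
    refine le_trans ?_ bound_ge
    fin_cases j <;> simp [Fin.sum_univ_eight] <;> norm_num
  · intro i j
    fin_cases j <;> simp [Fin.sum_univ_eight] <;> ring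

theorem base4 (B : Fin 6 → Fin 6 → Bool)
    (h : ∀ i, (B i 0 = B i 1 ∧ B i 0 = B i 2) ∨ (B i 3 = B i 4 ∧ B i 3 = B i 5)) :
    GoodB B := by
  have hr : Real.sqrt 10 ^ 2 = 10 := Real.sq_sqrt (by norm_num)
  have hr3 : (3 : ℝ) ≤ Real.sqrt 10 := Real.le_sqrt_of_sq_le (by norm_num)
  unfold GoodB GoodM
  generalize Real.sqrt 10 = r at hr hr3
  have ht : ∀ S : ℝ, ((5 - r) / 15 * S) ^ 2 / ((r - 2) / 3) = (r - 2) / 30 * S ^ 2 := by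
    intro S
    rw [div_eq_iff (by linarith)]
    linear_combination (-S ^ 2 / 150) * hr
  refine ⟨![2, 2, 2, 2, 2, 2, (r - 2) / 3, (r - 2) / 3],
    fun i =>
      let t := (5 - r) / 15 * (sg (B i 0) + sg (B i 1) + sg (B i 2))
      let u := (5 - r) / 15 * (sg (B i 3) + sg (B i 4) + sg (B i 5))
      ![sg (B i 0) - t, sg (B i 1) - t, sg (B i 2) - t, sg (B i 3) - u, sg (B i 4) - u,
        sg (B i 5) - u, t, u],
    ![![1, 0, 0, 0, 0, 0, 1, 0], ![0, 1, 0, 0, 0, 0, 1, 0], ![0, 0, 1, 0, 0, 0, 1, 0],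
      ![0, 0, 0, 1, 0, 0, 0, 1], ![0, 0, 0, 0, 1, 0, 0, 1], ![0, 0, 0, 0, 0, 1, 0, 1]],
    ?_, ?_, ?_, ?_⟩
  · intro k; fin_cases k <;> simp <;> linarith
  · intro i
    have h := h i
    simp only [Fin.sum_univ_eight]
    revert h
    generalize B i 0 = x0
    generalize B i 1 = x1
    generalize B i 2 = x2
    generalize B i 3 = x3
    generalize B i 4 = x4
    generalize B i 5 = x5
    intro h
    simp [ht]
    cases x0 <;> cases x1 <;> cases x2 <;> cases x3 <;> cases x4 <;> cases x5 <;>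
      first
      | (exfalso; revert h; decide)
      | (norm_num [sg]; nlinarith)
  · intro j
    fin_cases j <;> simp [Fin.sum_univ_eight] <;> linarith
  · intro i j
    fin_cases j <;> simp [Fin.sum_univ_eight]

theorem bit63 : ∀ i : Fin 6, (63 : ℕ).testBit i = true := by decide

set_option maxRecDepth 100000 in
theorem search_true : search 5 [0] startList = true := by decide +kernel

/-! ### Soundness of the search -/

/-- The sign matrix whose columns are given by the 6-bit words `w j` is good. -/
def GoodW (w : Fin 6 → ℕ) : Prop := GoodB fun i j => (w j).testBit i

theorem mask_spec {m : ℕ} (hm : m ∈ [0, 63]) : ∃ μ : Bool, ∀ i : Fin 6, m.testBit i = μ := by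
  simp only [List.mem_cons, List.not_mem_nil, or_false] at hm
  rcases hm with rfl | rfl
  · exact ⟨false, by decide⟩
  · exact ⟨true, by decide⟩

theorem constOn_spec {D A B : ℕ} (h : constOn D A B = true) :
    ∃ τ : Bool, ∀ i : ℕ, D.testBit i = true → A.testBit i = (B.testBit i ^^ τ) := by
  simp only [constOn, Bool.or_eq_true, Nat.beq_eq] at h
  rcases h with h | h
  · refine ⟨false, fun i hi => ?_⟩
    have h1 : ((A ^^^ B) &&& D).testBit i = (0 : ℕ).testBit i := congrArg (fun n => n.testBit i) h
    rw [Nat.testBit_and, Nat.testBit_xor, hi, Nat.zero_testBit] at h1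
    revert h1
    generalize A.testBit i = x
    generalize B.testBit i = y
    revert x y; decide
  · refine ⟨true, fun i hi => ?_⟩
    have h1 : ((A ^^^ B) &&& D).testBit i = D.testBit i := congrArg (fun n => n.testBit i) h
    rw [Nat.testBit_and, Nat.testBit_xor, hi] at h1
    revert h1
    generalize A.testBit i = x
    generalize B.testBit i = y
    revert x y; decide

theorem core1 (w : Fin 6 → ℕ) (p : Fin 6 → Fin 6) (hp : Function.Injective p) (m : ℕ)
    (hm : m ∈ [0, 63])
    (h1 : constOn (Nat.xor (Nat.xor (w (p 0)) (w (p 3))) m) (w (p 0)) (w (p 1)) = true)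
    (h2 : constOn (Nat.xor (Nat.xor (w (p 0)) (w (p 3))) m) (w (p 0)) (w (p 2)) = true) :
    GoodW w := by
  obtain ⟨μ, hμ⟩ := mask_spec hm
  obtain ⟨τ, hτ⟩ := constOn_spec h1
  obtain ⟨ν, hν⟩ := constOn_spec h2
  refine GoodB.of_col _ p hp ![false, τ, ν, μ, false, false] (base1 _ fun i => ?_)
  have a1 := hτ i
  have a2 := hν i
  have hD : (Nat.xor (Nat.xor (w (p 0)) (w (p 3))) m).testBit i =
      (((w (p 0)).testBit i ^^ (w (p 3)).testBit i) ^^ μ) := by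
    change ((w (p 0) ^^^ w (p 3)) ^^^ m).testBit i = _
    rw [Nat.testBit_xor, Nat.testBit_xor, hμ]
  rw [hD] at a1 a2
  simp only [Matrix.cons_val]
  revert a1 a2
  generalize (w (p 0)).testBit i = x0
  generalize (w (p 1)).testBit i = x1
  generalize (w (p 2)).testBit i = x2
  generalize (w (p 3)).testBit i = x3
  clear hτ hν hD hμ h1 h2
  revert x0 x1 x2 x3 τ ν μ
  decide

theorem crit1_sound (w : Fin 6 → ℕ) (q : Fin 6 → Fin 6) (hq : Function.Injective q) (m : ℕ)
    (hm : m ∈ [0, 63])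
    (h : crit1 m (w (q 0)) (w (q 1)) (w (q 2)) (w (q 3)) (w (q 4)) (w (q 5)) = true) :
    GoodW w := by
  simp only [crit1, Bool.and_eq_true, Bool.or_eq_true] at h
  obtain ⟨-, h⟩ := h
  have key : ∀ s : Fin 6 → Fin 6, Function.Injective s → s 0 = 0 → s 3 = 1 →
      constOn (Nat.xor (Nat.xor (w (q 0)) (w (q 1))) m) (w (q 0)) (w (q (s 1))) = true →
      constOn (Nat.xor (Nat.xor (w (q 0)) (w (q 1))) m) (w (q 0)) (w (q (s 2))) = true →
      GoodW w := by
    intro s hs h0 h3 h1 h2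
    refine core1 w (q ∘ s) (hq.comp hs) m hm ?_ ?_ <;>
      simp only [Function.comp, h0, h3] <;> assumption
  rcases h with (⟨h1, (h2 | h2) | h2⟩ | ⟨h1, h2 | h2⟩) | ⟨h1, h2⟩
  · exact key ![0, 2, 3, 1, 4, 5] (by decide) rfl rfl h1 h2
  · exact key ![0, 2, 4, 1, 3, 5] (by decide) rfl rfl h1 h2
  · exact key ![0, 2, 5, 1, 3, 4] (by decide) rfl rfl h1 h2
  · exact key ![0, 3, 4, 1, 2, 5] (by decide) rfl rfl h1 h2
  · exact key ![0, 3, 5, 1, 2, 4] (by decide) rfl rfl h1 h2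
  · exact key ![0, 4, 5, 1, 2, 3] (by decide) rfl rfl h1 h2

theorem pair1_sound (w : Fin 6 → ℕ) (q : Fin 6 → Fin 6) (hq : Function.Injective q)
    (h : pair1 (w (q 0)) (w (q 1)) (w (q 2)) (w (q 3)) (w (q 4)) (w (q 5)) = true) :
    GoodW w := by
  simp only [pair1, Bool.or_eq_true] at h
  rcases h with h | h
  · exact crit1_sound w q hq 0 (by simp) h
  · exact crit1_sound w q hq 63 (by simp) h

theorem test1_sound (w : Fin 6 → ℕ)
    (h : test1 (w 0) (w 1) (w 2) (w 3) (w 4) (w 5) = true) : GoodW w := by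
  simp only [test1, Bool.or_eq_true, or_assoc] at h
  rcases h with h | h | h | h | h | h | h | h | h | h | h | h | h | h | h
  · exact pair1_sound w ![0, 1, 2, 3, 4, 5] (by decide) h
  · exact pair1_sound w ![0, 2, 1, 3, 4, 5] (by decide) h
  · exact pair1_sound w ![0, 3, 1, 2, 4, 5] (by decide) h
  · exact pair1_sound w ![0, 4, 1, 2, 3, 5] (by decide) h
  · exact pair1_sound w ![0, 5, 1, 2, 3, 4] (by decide) h
  · exact pair1_sound w ![1, 2, 0, 3, 4, 5] (by decide) h
  · exact pair1_sound w ![1, 3, 0, 2, 4, 5] (by decide) h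
  · exact pair1_sound w ![1, 4, 0, 2, 3, 5] (by decide) h
  · exact pair1_sound w ![1, 5, 0, 2, 3, 4] (by decide) h
  · exact pair1_sound w ![2, 3, 0, 1, 4, 5] (by decide) h
  · exact pair1_sound w ![2, 4, 0, 1, 3, 5] (by decide) h
  · exact pair1_sound w ![2, 5, 0, 1, 3, 4] (by decide) h
  · exact pair1_sound w ![3, 4, 0, 1, 2, 5] (by decide) h
  · exact pair1_sound w ![3, 5, 0, 1, 2, 4] (by decide) h
  · exact pair1_sound w ![4, 5, 0, 1, 2, 3] (by decide) h

theorem ncst_bit (m m' A B C i : ℕ) : (ncst m m' A B C).testBit i =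
    (((A.testBit i ^^ B.testBit i) ^^ m.testBit i) ||
      ((A.testBit i ^^ C.testBit i) ^^ m'.testBit i)) := by
  change (((A ^^^ B) ^^^ m) ||| ((A ^^^ C) ^^^ m')).testBit i = _
  simp only [Nat.testBit_or, Nat.testBit_xor]

theorem split34_sound (w : Fin 6 → ℕ) (p : Fin 6 → Fin 6) (hp : Function.Injective p)
    (h : split34 (w (p 0)) (w (p 1)) (w (p 2)) (w (p 3)) (w (p 4)) (w (p 5)) = true) :
    GoodW w := by
  simp only [split34, List.any_eq_true] at h
  obtain ⟨m1, hm1, m2, hm2, m3, hm3, m4, hm4, h⟩ := h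
  obtain ⟨a, ha⟩ := mask_spec hm1
  obtain ⟨b, hb⟩ := mask_spec hm2
  obtain ⟨c, hc⟩ := mask_spec hm3
  obtain ⟨d, hd⟩ := mask_spec hm4
  simp only [crit34, Bool.or_eq_true, Bool.and_eq_true, Nat.beq_eq] at h
  rcases h with ⟨h1, h2⟩ | h
  · refine GoodB.of_col _ p hp ![false, a, b, false, c, d] (base3 _ fun i => ?_)
    have e1 := congrArg (fun n => n.testBit i) h1
    have e2 := congrArg (fun n => n.testBit i) h2
    have e3 := bit63 i
    simp only [ncst_bit, ha, hb, hc, hd, e3] at e1 e2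
    simp only [Matrix.cons_val]
    clear h1 h2 e3 ha hb hc hd
    revert e1 e2
    generalize (w (p 0)).testBit i = x0
    generalize (w (p 1)).testBit i = x1
    generalize (w (p 2)).testBit i = x2
    generalize (w (p 3)).testBit i = x3
    generalize (w (p 4)).testBit i = x4
    generalize (w (p 5)).testBit i = x5
    intro e1 e2
    constructor
    · clear e2; revert x0 x1 x2 a b; decide
    · clear e1; revert x3 x4 x5 c d; decide
  · refine GoodB.of_col _ p hp ![false, a, b, false, c, d] (base4 _ fun i => ?_)
    have e1 : (ncst m1 m2 (w (p 0)) (w (p 1)) (w (p 2)) &&&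
      ncst m3 m4 (w (p 3)) (w (p 4)) (w (p 5))).testBit i = (0 : ℕ).testBit i :=
      congrArg (fun n => n.testBit i) h
    simp only [Nat.testBit_and, ncst_bit, ha, hb, hc, hd, Nat.zero_testBit,
      Bool.and_eq_false_iff] at e1
    simp only [Matrix.cons_val]
    clear h ha hb hc hd
    revert e1
    generalize (w (p 0)).testBit i = x0
    generalize (w (p 1)).testBit i = x1
    generalize (w (p 2)).testBit i = x2
    generalize (w (p 3)).testBit i = x3
    generalize (w (p 4)).testBit i = x4
    generalize (w (p 5)).testBit i = x5
    intro e1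
    rcases e1 with e1 | e1
    · left; revert x0 x1 x2 a b; decide
    · right; revert x3 x4 x5 c d; decide

theorem test34_sound (w : Fin 6 → ℕ)
    (h : test34 (w 0) (w 1) (w 2) (w 3) (w 4) (w 5) = true) : GoodW w := by
  simp only [test34, Bool.or_eq_true, or_assoc] at h
  rcases h with h | h | h | h | h | h | h | h | h | h
  · exact split34_sound w ![0, 1, 2, 3, 4, 5] (by decide) h
  · exact split34_sound w ![0, 1, 3, 2, 4, 5] (by decide) h
  · exact split34_sound w ![0, 1, 4, 2, 3, 5] (by decide) h
  · exact split34_sound w ![0, 1, 5, 2, 3, 4] (by decide) h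
  · exact split34_sound w ![0, 2, 3, 1, 4, 5] (by decide) h
  · exact split34_sound w ![0, 2, 4, 1, 3, 5] (by decide) h
  · exact split34_sound w ![0, 2, 5, 1, 3, 4] (by decide) h
  · exact split34_sound w ![0, 3, 4, 1, 2, 5] (by decide) h
  · exact split34_sound w ![0, 3, 5, 1, 2, 4] (by decide) h
  · exact split34_sound w ![0, 4, 5, 1, 2, 3] (by decide) h

theorem word_xor : ∀ s ∈ List.range 64, ∀ a b c d e f : Bool,
    Nat.xor s (a.toNat + 2 * b.toNat + 4 * c.toNat + 8 * d.toNat + 16 * e.toNat + 32 * f.toNat) =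
    (a ^^ s.testBit 0).toNat + 2 * (b ^^ s.testBit 1).toNat + 4 * (c ^^ s.testBit 2).toNat
      + 8 * (d ^^ s.testBit 3).toNat + 16 * (e ^^ s.testBit 4).toNat
      + 32 * (f ^^ s.testBit 5).toNat := by
  decide +kernel

theorem test2_sound (w : Fin 6 → ℕ)
    (h : test2 (w 0) (w 1) (w 2) (w 3) (w 4) (w 5) = true) : GoodW w := by
  simp only [test2, List.any_eq_true, List.all_eq_true] at h
  obtain ⟨s, hs, h⟩ := h
  refine GoodB.of_col _ id Function.injective_id (fun j => s.testBit j) (base2 _ fun i => ?_)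
  have h1 := h i (List.mem_range.2 i.2)
  simp only [rowWord, word_xor s hs, Bool.not_eq_true'] at h1
  exact h1

theorem test_sound (w : Fin 6 → ℕ)
    (h : test (w 0) (w 1) (w 2) (w 3) (w 4) (w 5) = true) : GoodW w := by
  simp only [test, Bool.or_eq_true] at h
  rcases h with (h | h) | h
  · exact test1_sound w h
  · exact test34_sound w h
  · exact test2_sound w h

theorem bad_pair : ∀ z ∈ List.range 64, okWord z = false → ∃ m ∈ [0, 63], ∀ u ∈ List.range 64,
    (Nat.beq (Nat.land u (Nat.xor z m)) 0 || Nat.beq (Nat.land u (Nat.xor z m)) (Nat.xor z m))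
      = true := by
  decide +kernel

theorem bad_pair_good (w : Fin 6 → ℕ) (h64 : ∀ j, w j < 64) (j k : Fin 6) (hjk : j ≠ k)
    (h : okWord (Nat.xor (w j) (w k)) = false) : GoodW w := by
  have hx : ∀ a b, Nat.xor (w a) (w b) ∈ List.range 64 := fun a b =>
    List.mem_range.2 (Nat.xor_lt_two_pow (n := 6) (h64 a) (h64 b))
  obtain ⟨m, hm, hu⟩ := bad_pair _ (hx j k) h
  have hp : ∀ j k : Fin 6, j ≠ k →
      (Equiv.swap 0 j * Equiv.swap 3 (Equiv.swap 0 j k)) 0 = j ∧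
      (Equiv.swap 0 j * Equiv.swap 3 (Equiv.swap 0 j k)) 3 = k := by decide
  obtain ⟨p0, p3⟩ := hp j k hjk
  refine core1 w _ (Equiv.swap 0 j * Equiv.swap 3 (Equiv.swap 0 j k)).injective m hm ?_ ?_ <;>
  · rw [p0, p3]
    exact hu _ (hx _ _)

theorem search_step {n : ℕ} {ch cand : List ℕ} (h : search (n + 1) ch cand = true) {x : ℕ}
    (hx : x ∈ cand) :
    search n (x :: ch) (cand.filter fun y => Nat.blt x y && okWord (Nat.xor x y)) = true := by
  rw [search, List.all_eq_true] at h
  exact h x hx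

theorem mem_start : ∀ z ∈ List.range 64, z.testBit 0 = false → okWord z = true →
    z ∈ startList := by
  decide +kernel

theorem good_sorted (w : Fin 6 → ℕ) (h64 : ∀ j, w j < 64) (hev : ∀ j, (w j).testBit 0 = false)
    (h0 : w 0 = 0) (hm : Monotone w) : GoodW w := by
  by_cases hb : ∃ j k, j ≠ k ∧ okWord (Nat.xor (w j) (w k)) = false
  · obtain ⟨j, k, hjk, h⟩ := hb
    exact bad_pair_good w h64 j k hjk h
  push Not at hb
  have hok : ∀ j k, j ≠ k → okWord (Nat.xor (w j) (w k)) = true := fun j k h => by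
    simpa using hb j k h
  have hlt : ∀ j k, j < k → Nat.blt (w j) (w k) = true := by
    intro j k h
    rw [Nat.blt_eq]
    refine lt_of_le_of_ne (hm h.le) fun he => ?_
    have h1 := hok j k h.ne
    rw [he, show Nat.xor (w k) (w k) = 0 from Nat.xor_self _] at h1
    exact absurd h1 (by decide)
  have hst : ∀ j, 0 < j → w j ∈ startList := by
    intro j hj
    refine mem_start _ (List.mem_range.2 (h64 j)) (hev j) ?_
    have h1 := hok 0 j hj.ne
    rwa [h0, show Nat.xor 0 (w j) = w j from Nat.zero_xor _] at h1
  have hstep : ∀ j k : Fin 6, j < k →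
      (Nat.blt (w j) (w k) && okWord (Nat.xor (w j) (w k))) = true := fun j k h => by
    rw [hlt j k h, hok j k h.ne]; rfl
  have s1 := search_step search_true (hst 1 (by decide))
  have s2 := search_step s1 (x := w 2)
    (by simp only [List.mem_filter]; exact ⟨hst 2 (by decide), hstep 1 2 (by decide)⟩)
  have s3 := search_step s2 (x := w 3)
    (by
      simp only [List.mem_filter]
      exact ⟨⟨hst 3 (by decide), hstep 1 3 (by decide)⟩, hstep 2 3 (by decide)⟩)
  have s4 := search_step s3 (x := w 4)
    (by
      simp only [List.mem_filter]
      exact ⟨⟨⟨hst 4 (by decide), hstep 1 4 (by decide)⟩, hstep 2 4 (by decide)⟩,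
        hstep 3 4 (by decide)⟩)
  have s5 := search_step s4 (x := w 5)
    (by
      simp only [List.mem_filter]
      exact ⟨⟨⟨⟨hst 5 (by decide), hstep 1 5 (by decide)⟩, hstep 2 5 (by decide)⟩,
        hstep 3 5 (by decide)⟩, hstep 4 5 (by decide)⟩)
  rw [search, leaf] at s5
  apply test_sound
  rw [h0]
  exact s5

theorem good_all (B : Fin 6 → Fin 6 → Bool) : GoodB B := by
  apply GoodB.of_row B (fun i => B i 0)
  apply GoodB.of_col _ id Function.injective_id (fun j => (B 0 j ^^ B 0 0))
  set B' : Fin 6 → Fin 6 → Bool := fun i j => ((B i (id j) ^^ B i 0) ^^ (B 0 j ^^ B 0 0)) with hB'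
  have c0 : ∀ i, B' i 0 = false := by intro i; simp [hB']
  have r0 : ∀ j, B' 0 j = false := by
    intro j; simp only [hB', id]; cases B 0 j <;> cases B 0 0 <;> rfl
  let w : Fin 6 → ℕ := fun j => Nat.ofBits fun i => B' i j
  have hw : ∀ i j : Fin 6, (w j).testBit i = B' i j := fun i j =>
    Nat.testBit_ofBits_lt (fun i => B' i j) i i.2
  have h64 : ∀ j, w j < 64 := fun j => Nat.ofBits_lt_two_pow fun i => B' i j
  have hw0 : w 0 = 0 := by
    simp only [w, c0]; decide
  have hs := Tuple.monotone_sort w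
  apply GoodB.of_col _ (Tuple.sort w) (Tuple.sort w).injective (fun _ => false)
  have hg : GoodW (w ∘ Tuple.sort w) := by
    refine good_sorted _ (fun j => h64 _) (fun j => ?_) ?_ hs
    · have := hw 0 (Tuple.sort w j)
      rw [r0] at this
      exact this
    · have h1 := hs (Fin.zero_le ((Tuple.sort w).symm 0))
      simp only [Function.comp, Equiv.apply_symm_apply, hw0] at h1
      exact Nat.le_zero.1 h1
  have he : (fun i j => (B' i (Tuple.sort w j) ^^ false)) =
      fun (i j : Fin 6) => ((w ∘ Tuple.sort w) j).testBit i := by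
    funext i j
    rw [Bool.xor_false]
    exact (hw i _).symm
  rw [he]
  exact hg
/-! ### The upper bound -/

theorem hadamard_bound (M : Matrix (Fin 6) (Fin 6) ℝ) (hM : ∀ i j, |M i j| ≤ 1)
    (C : Matrix (Fin 6) (Fin 6) ℂ) (hC : Matrix.copNorm C ≤ 1) :
    Matrix.copNorm (Matrix.hadamard (M.map Complex.ofReal) C) ≤ (4 + Real.sqrt 10) / 3 := by
  let S : Set (Fin 6 → Fin 6 → ℝ) := {N | Matrix.copNorm
    (Matrix.hadamard (Matrix.map (Matrix.of N) Complex.ofReal) C) ≤ (4 + Real.sqrt 10) / 3}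
  have hS : Convex ℝ S := by
    intro x hx y hy a b ha hb hab
    simp only [S, Set.mem_ofPred_eq] at hx hy ⊢
    have h1 : Matrix.hadamard (Matrix.map (Matrix.of (a • x + b • y)) Complex.ofReal) C =
        (a : ℂ) • Matrix.hadamard (Matrix.map (Matrix.of x) Complex.ofReal) C +
        (b : ℂ) • Matrix.hadamard (Matrix.map (Matrix.of y) Complex.ofReal) C := by
      ext i j
      simp [Matrix.hadamard_apply]
      ring
    rw [h1]
    unfold Matrix.copNorm at hx hy ⊢
    rw [map_add, map_smul, map_smul, map_add, map_smul, map_smul]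
    refine (norm_add_le _ _).trans ?_
    rw [norm_smul, norm_smul, Complex.norm_real, Complex.norm_real, Real.norm_of_nonneg ha,
      Real.norm_of_nonneg hb]
    calc _ ≤ a * ((4 + Real.sqrt 10) / 3) + b * ((4 + Real.sqrt 10) / 3) := by gcongr
      _ = (4 + Real.sqrt 10) / 3 := by rw [← add_mul, hab, one_mul]
  let V : Set (Fin 6 → Fin 6 → ℝ) :=
    Set.univ.pi fun _ => Set.univ.pi fun _ => ({-1, 1} : Set ℝ)
  have hV : V ⊆ S := by
    intro N hN
    have hN' : ∀ i j, N i j = -1 ∨ N i j = 1 := fun i j => by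
      simpa using hN i trivial j trivial
    have h1 : N = fun i j => sg (decide (N i j = -1)) := by
      funext i j
      rcases hN' i j with h | h
      · simp [h, sg]
      · rw [h]; norm_num [sg]
    have h2 := good_all fun i j => decide (N i j = -1)
    unfold GoodB at h2
    rw [← h1] at h2
    exact h2.le C hC
  have hmem : (fun i j => M i j) ∈ convexHull ℝ V := by
    simp only [V, convexHull_pi]
    intro i _ j _
    rw [convexHull_pair, segment_eq_Icc (by norm_num)]
    exact abs_le.1 (hM i j)
  exact convexHull_min hV hS hmem

/-! ### The extremal matrix -/

/-- The ±1 matrix of maximal determinant. -/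
def extM : Matrix (Fin 6) (Fin 6) ℝ :=
  !![-1, 1, 1, 1, 1, 1; 1, -1, 1, 1, 1, 1; 1, 1, -1, 1, 1, 1;
     -1, -1, -1, -1, 1, 1; -1, -1, -1, 1, -1, 1; -1, -1, -1, 1, 1, -1]

/-- Its unitary polar factor, `x = (1 - θ) / 2 - 1`, `y = (1 - θ) / 2`, `z = (1 - 3 θ) / 2`. -/
def polM (x y z : ℝ) : Matrix (Fin 6) (Fin 6) ℝ :=
  !![x, y, y, z, z, z; y, x, y, z, z, z; y, y, x, z, z, z;
     -z, -z, -z, x, y, y; -z, -z, -z, y, x, y; -z, -z, -z, y, y, x]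

theorem polM_mul (x y z : ℝ) (h1 : x ^ 2 + 2 * y ^ 2 + 3 * z ^ 2 = 1)
    (h2 : 2 * x * y + y ^ 2 + 3 * z ^ 2 = 0) : (polM x y z).transpose * polM x y z = 1 := by
  ext i j
  fin_cases i <;> fin_cases j <;>
    simp [polM, Matrix.mul_apply, Fin.sum_univ_six] <;> first | ring1 | linear_combination h1 | linear_combination h2

open scoped Matrix.Norms.L2Operator in
theorem copNorm_polM (x y z : ℝ) (h1 : x ^ 2 + 2 * y ^ 2 + 3 * z ^ 2 = 1)
    (h2 : 2 * x * y + y ^ 2 + 3 * z ^ 2 = 0) :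
    Matrix.copNorm ((polM x y z).map Complex.ofReal) ≤ 1 := by
  set U := (polM x y z).map Complex.ofReal with hU
  have h : U.conjTranspose * U = 1 := by
    have h3 := congrArg (fun A : Matrix (Fin 6) (Fin 6) ℝ => A.map Complex.ofRealHom)
      (polM_mul x y z h1 h2)
    simp only [Matrix.map_mul] at h3
    rw [Matrix.map_one _ (map_zero _) (map_one _)] at h3
    rw [← h3]
    congr 1
    ext i j
    simp [hU]
  have h4 := Matrix.l2_opNorm_conjTranspose_mul_self U
  rw [h, norm_one] at h4
  have h5 : Matrix.copNorm U = ‖U‖ := (Matrix.l2_opNorm_def U).symm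
  rw [h5]
  nlinarith [norm_nonneg U]

theorem lower (C : Matrix (Fin 6) (Fin 6) ℂ) (c : ℝ) (hc : 0 ≤ c)
    (h : ∀ i, ∑ j, C i j = c) : c ≤ Matrix.copNorm C := by
  let v : EuclideanSpace ℂ (Fin 6) := WithLp.toLp 2 fun _ => 1
  have h1 : Matrix.toEuclideanLin C v = (c : ℂ) • v := by
    ext i
    simp [Matrix.toLpLin_apply, Matrix.mulVec, dotProduct, v, h]
  have h2 := (LinearMap.toContinuousLinearMap (Matrix.toEuclideanLin C)).le_opNorm v
  have h3 : 0 < ‖v‖ := by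
    rw [norm_pos_iff]
    intro h0
    have := congrArg (fun u : EuclideanSpace ℂ (Fin 6) => u 0) h0
    simp [v] at this
  change ‖Matrix.toEuclideanLin C v‖ ≤ Matrix.copNorm C * ‖v‖ at h2
  rw [h1, norm_smul, Complex.norm_real, Real.norm_of_nonneg hc] at h2
  exact le_of_mul_le_mul_right h2 h3

theorem ext_lower : ∃ C : Matrix (Fin 6) (Fin 6) ℂ, Matrix.copNorm C ≤ 1 ∧
    (4 + Real.sqrt 10) / 3 ≤ Matrix.copNorm (Matrix.hadamard (extM.map Complex.ofReal) C) := by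
  have hr : Real.sqrt 10 ^ 2 = 10 := Real.sq_sqrt (by norm_num)
  have hr0 : 0 ≤ Real.sqrt 10 := Real.sqrt_nonneg 10
  generalize Real.sqrt 10 = r at hr hr0
  refine ⟨(polM ((r - 20) / 30) ((r + 10) / 30) (r / 10)).map Complex.ofReal,
    copNorm_polM _ _ _ (by linear_combination hr / 30) (by linear_combination hr / 30),
    lower _ _ (by positivity) fun i => ?_⟩
  fin_cases i <;> simp [Fin.sum_univ_six, extM, polM, Matrix.hadamard_apply] <;> ring

theorem schurNorm_le (M : Matrix (Fin 6) (Fin 6) ℝ) (hM : ∀ i j, |M i j| ≤ 1) :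
    Matrix.schurNorm (M.map Complex.ofReal) ≤ (4 + Real.sqrt 10) / 3 := by
  apply Real.sSup_le
  · rintro x ⟨C, hC, rfl⟩
    exact hadamard_bound M hM C hC
  · positivity

theorem extM_abs (i j : Fin 6) : |extM i j| ≤ 1 := by
  fin_cases i <;> fin_cases j <;> simp [extM]

theorem le_schurNorm_extM :
    (4 + Real.sqrt 10) / 3 ≤ Matrix.schurNorm (extM.map Complex.ofReal) := by
  obtain ⟨C, hC, h⟩ := ext_lower
  refine h.trans (le_csSup ⟨(4 + Real.sqrt 10) / 3, ?_⟩ ⟨C, hC, rfl⟩)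
  rintro x ⟨C, hC, rfl⟩
  exact hadamard_bound extM extM_abs C hC

/-- `r 6 = (4 + √10) / 3`. -/
theorem rSchur_six : rSchur 6 = (4 + Real.sqrt 10) / 3 := by
  apply le_antisymm
  · apply Real.sSup_le
    · rintro x ⟨M, hM, rfl⟩
      exact schurNorm_le M hM
    · positivity
  · refine le_schurNorm_extM.trans (le_csSup ⟨(4 + Real.sqrt 10) / 3, ?_⟩ ⟨extM, extM_abs, rfl⟩)
    rintro x ⟨M, hM, rfl⟩
    exact schurNorm_le M hM
end
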